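/- Let d ≥ 1, D := {1,...,d}, let B ⊆ D with |B| > 1, and let Q be a Young function such that L_Q(I^d) is not contained in L log^{|B|-1} L(I^d). Then the set of functions f ∈ L_Q(I^d) for which the means (L_{n(B)}∘R_{n(B')})(f) converge in Lebesgue measure on I^d (as n → ∞) to an almost everywhere finite function is of first Baire category (meager) in the normed space (L_Q(I^d), ‖·‖_{L_Q}); here n(B) denotes the index vector all of whose coordinates equal n. -/

import Mathlib

open MeasureTheory Filter

noncomputable section

/-- The unit cube `[0,1)^d`. -/
def unitCube (d : ℕ) : Set (Fin d → ℝ) := Set.univ.pi fun _ => Set.Ico (0:ℝ) 1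

/-- Lebesgue measure restricted to the unit cube `[0,1)^d`. -/
def cubeMeasure (d : ℕ) : Measure (Fin d → ℝ) := volume.restrict (unitCube d)

/-- The `1`-periodic function equal to `1` on `[0,1/2)` and to `-1` on `[1/2,1)`. -/
def r0 (x : ℝ) : ℝ := if Int.fract x < 1/2 then 1 else -1

/-- The Rademacher functions. -/
def rademacher (n : ℕ) (x : ℝ) : ℝ := r0 (2 ^ n * x)

/-- The Walsh functions (in Paley enumeration, via binary digits). -/
def walsh (n : ℕ) (x : ℝ) : ℝ :=
  ∏ k ∈ Finset.range (n + 1), if n.testBit k then rademacher k x else 1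

/-- The Walsh–Dirichlet kernel `D_n`. -/
def dirichletKernel (n : ℕ) (x : ℝ) : ℝ := ∑ k ∈ Finset.range n, walsh k x

/-- `l_n = ∑_{k=1}^{n-1} 1/k`. -/
def logSum (n : ℕ) : ℝ := ∑ k ∈ Finset.Icc 1 (n - 1), (1 : ℝ) / k

/-- The Nörlund logarithmic kernel `F_n`. -/
def FKernel (n : ℕ) (u : ℝ) : ℝ :=
  (1 / logSum n) * ∑ i ∈ Finset.Ico 1 n, dirichletKernel (n - i) u / i

/-- The Riesz logarithmic kernel `G_n`. -/
def GKernel (n : ℕ) (u : ℝ) : ℝ :=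
  (1 / logSum n) * ∑ i ∈ Finset.Ico 1 n, dirichletKernel i u / i

/-- Walsh–Fourier coefficient of `f` on the unit cube. -/
def walshCoef {d : ℕ} (f : (Fin d → ℝ) → ℝ) (j : Fin d → ℕ) : ℝ :=
  ∫ x, f x * ∏ i, walsh (j i) (x i) ∂(cubeMeasure d)

/-- Rectangular partial sums of the multiple Walsh–Fourier series. -/
def rectPartialSum {d : ℕ} (f : (Fin d → ℝ) → ℝ) (N : Fin d → ℕ) (x : Fin d → ℝ) : ℝ :=
  ∑ j ∈ Fintype.piFinset (fun i => Finset.range (N i)),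
    walshCoef f j * ∏ i, walsh (j i) (x i)

/-- The mixed logarithmic means `(L_{n_B} ∘ R_{n_{B'}})(f)`. -/
def mixedLogMean {d : ℕ} (B : Finset (Fin d)) (f : (Fin d → ℝ) → ℝ)
    (n : Fin d → ℕ) (x : Fin d → ℝ) : ℝ :=
  (∏ j, logSum (n j))⁻¹ *
    ∑ i ∈ Fintype.piFinset (fun j => Finset.Ico 1 (n j)),
      rectPartialSum f (fun j => if j ∈ B then n j - i j else i j) x / ∏ j, (i j : ℝ)

/-- A Young function: convex, continuous, even, vanishing at `0`, with
`Q(u)/u → ∞` at `+∞` and `Q(u)/u → 0` at `0`. -/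
structure YoungFunction where
  toFun : ℝ → ℝ
  nonneg : ∀ u, 0 ≤ toFun u
  convexOn : ConvexOn ℝ Set.univ toFun
  continuous : Continuous toFun
  even : ∀ u, toFun (-u) = toFun u
  map_zero : toFun 0 = 0
  tendsto_atTop : Tendsto (fun u => toFun u / u) atTop atTop
  tendsto_zero : Tendsto (fun u => toFun u / u) (nhdsWithin 0 {(0:ℝ)}ᶜ) (nhds 0)

/-- The set of admissible constants `k` in the Luxemburg norm of `f`. -/
def orliczSet {d : ℕ} (Q : YoungFunction) (f : (Fin d → ℝ) → ℝ) : Set ℝ :=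
  {k | 0 < k ∧ Integrable (fun x => Q.toFun (|f x| / k)) (cubeMeasure d) ∧
    ∫ x, Q.toFun (|f x| / k) ∂(cubeMeasure d) ≤ 1}

/-- `f` belongs to the Orlicz space `L_Q(I^d)`. -/
def MemOrlicz {d : ℕ} (Q : YoungFunction) (f : (Fin d → ℝ) → ℝ) : Prop :=
  Measurable f ∧ (orliczSet Q f).Nonempty

/-- The Luxemburg norm on the Orlicz space `L_Q(I^d)`. -/
def orliczNorm {d : ℕ} (Q : YoungFunction) (f : (Fin d → ℝ) → ℝ) : ℝ :=
  sInf (orliczSet Q f)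

/-- `p_n = 2^{2n} + 2^{2n-2} + ⋯ + 2^0`. -/
def pIdx (n : ℕ) : ℕ := ∑ k ∈ Finset.range (n + 1), 4 ^ k

/-- `m̃ = ⌊ l_{p_{⌊m/2⌋}-1}/16 - 2^15 ⌋`. -/
def mTilde (m : ℕ) : ℤ := ⌊logSum (pIdx (m / 2) - 1) / 16 - 2 ^ 15⌋

/-- `m₀ = min{m : m̃ > 1}`. -/
def m₀ : ℕ := sInf {m : ℕ | 1 < mTilde m}

/-- The set `Ω_n`. -/
def Omega (n : ℕ) : Set ℝ :=
  ⋃ m ∈ Finset.Icc n (2 * n),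
    Set.Ico ((2:ℝ) ^ (-(m:ℤ) - 1) + (2:ℝ) ^ (-(m:ℤ) - mTilde m)) ((2:ℝ) ^ (-(m:ℤ)))

/-- `k`-th binary digit of `x` (the expansion not terminating in `1`'s). -/
def binDigit (k : ℕ) (x : ℝ) : ℕ := (⌊x * 2 ^ (k + 1)⌋).toNat % 2

/-- Dyadic addition on `[0,1)`. -/
def dyadicAdd (x t : ℝ) : ℝ :=
  ∑' k : ℕ, |(binDigit k x : ℝ) - (binDigit k t : ℝ)| / 2 ^ (k + 1)

/-- Dyadic convolution `f ∗ K` on `[0,1)`. -/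
def dyadicConv (f K : ℝ → ℝ) (x : ℝ) : ℝ :=
  ∫ t in Set.Ico (0:ℝ) 1, f t * K (dyadicAdd x t)

/-- Lebesgue measure restricted to `[0,1)`. -/
def unitMeasure : Measure ℝ := volume.restrict (Set.Ico (0:ℝ) 1)

/-- A set `A ⊆ L_Q(I^d)` is nowhere dense w.r.t. the Luxemburg norm. -/
def OrliczNowhereDense {d : ℕ} (Q : YoungFunction) (A : Set ((Fin d → ℝ) → ℝ)) : Prop :=
  ∀ f, MemOrlicz Q f → ∀ ε > 0, ∃ g, MemOrlicz Q g ∧ ∃ δ > 0,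
    (∀ h, MemOrlicz Q h → orliczNorm Q (h - g) < δ → orliczNorm Q (h - f) < ε) ∧
    (∀ h, MemOrlicz Q h → orliczNorm Q (h - g) < δ → h ∉ A)

/-- A set `A ⊆ L_Q(I^d)` is of first Baire category (meager) w.r.t. the Luxemburg norm. -/
def OrliczMeager {d : ℕ} (Q : YoungFunction) (A : Set ((Fin d → ℝ) → ℝ)) : Prop :=
  ∃ F : ℕ → Set ((Fin d → ℝ) → ℝ), (∀ k, OrliczNowhereDense Q (F k)) ∧ A ⊆ ⋃ k, F k

/-!
Put `b = |B|` and restrict to the indices `n = 2^κ p`, where `p` has alternating binary digits.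
On step functions of the binary digits `κ, …, κ + M - 1` of the variables in `B`, the mean of order
`n` tends, as `κ → ∞`, to the `p`-th cubic partial sum of a function on the dyadic group
`(Fin M → Bool)^B`, because `logSum (2^κ a) / logSum (2^κ p) → 1` for `0 < a ≤ p`; the Riesz
factors act trivially on functions of the variables in `B`.

The Dirichlet kernel of order `p` has size about `2^m` on the set of points whose first nonzero
digit is the `m`-th one, so the product kernel exceeds `2^(bq - b)` on a set of measure about
`q^(b-1) 2^(-bq)`: there are about `q^(b-1)` ways to write `bq` as an ordered sum of `b` indices.
About `N = 2^(bq) / q^(b-1)` randomly placed and randomly signed cells then give a function whose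
partial sum is large on a set of measure at least `1/4`. Scaled by a height `h` with
`Q h ≤ ε h log^(b-1) (1 + h)`, this function has Orlicz norm at most one, while its mean is at least
of order `1/ε`. Such heights exist because `L_Q` is not contained in `L log^(b-1) L`, and a
Banach–Steinhaus argument for convergence in measure concludes.
-/

section Rademacher

lemma rademacher_eq_one_or (n : ℕ) (x : ℝ) : rademacher n x = 1 ∨ rademacher n x = -1 := by
  unfold rademacher r0
  split_ifs <;> simp

lemma rademacher_mul_self (n : ℕ) (x : ℝ) : rademacher n x * rademacher n x = 1 := by
  rcases rademacher_eq_one_or n x with h | h <;> rw [h] <;> norm_num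

lemma abs_rademacher (n : ℕ) (x : ℝ) : |rademacher n x| = 1 := by
  rcases rademacher_eq_one_or n x with h | h <;> rw [h] <;> norm_num

lemma rademacher_succ (n : ℕ) (x : ℝ) : rademacher (n + 1) x = rademacher n (2 * x) := by
  unfold rademacher
  rw [pow_succ, mul_assoc]

lemma rademacher_periodic (n : ℕ) : Function.Periodic (rademacher n) 1 := by
  intro x
  have shift : (2 : ℝ) ^ n * (x + 1) = 2 ^ n * x + ((2 ^ n : ℕ) : ℝ) := by push_cast; ring
  unfold rademacher r0
  rw [shift, Int.fract_add_natCast]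

@[fun_prop]
lemma measurable_rademacher (n : ℕ) : Measurable (rademacher n) := by
  unfold rademacher r0
  exact Measurable.ite (measurableSet_lt (by fun_prop) measurable_const)
    measurable_const measurable_const

lemma rademacher_zero_of_lt_half {x : ℝ} (hx : x ∈ Set.Ioo (0 : ℝ) (1 / 2)) :
    rademacher 0 x = 1 := by
  have fract : Int.fract x = x := Int.fract_eq_self.2 ⟨hx.1.le, by linarith [hx.2]⟩
  rw [rademacher, r0, pow_zero, one_mul, fract, if_pos hx.2]

lemma rademacher_zero_of_half_lt {x : ℝ} (hx : x ∈ Set.Ioo (1 / 2 : ℝ) 1) :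
    rademacher 0 x = -1 := by
  have fract : Int.fract x = x := Int.fract_eq_self.2 ⟨by linarith [hx.1], hx.2⟩
  rw [rademacher, r0, pow_zero, one_mul, fract, if_neg hx.1.not_gt]

-- The contributions of `b` on the two halves of the interval cancel.
lemma integral_rademacher_zero_mul_comp_two_mul (a b : ℝ) {g : ℝ → ℝ}
    (periodic : Function.Periodic g 1) (integrable : ∀ u v, IntervalIntegrable g volume u v) :
    ∫ x in (0 : ℝ)..1, (a + b * rademacher 0 x) * g (2 * x) = a * ∫ x in (0 : ℝ)..1, g x := by
  have integrable_comp (u v c : ℝ) :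
      IntervalIntegrable (fun x => c * g (2 * x)) volume u v := by
    have := (integrable (2 * u) (2 * v)).comp_mul_left (c := 2)
    simp only [ne_eq, OfNat.ofNat_ne_zero, not_false_eq_true, mul_div_cancel_left₀] at this
    exact this.const_mul c
  have left : Set.EqOn (fun x => (a + b * rademacher 0 x) * g (2 * x))
      (fun x => (a + b) * g (2 * x)) (Set.Ioo 0 (1 / 2)) := fun x hx => by
    simp only [rademacher_zero_of_lt_half hx, mul_one]
  have right : Set.EqOn (fun x => (a + b * rademacher 0 x) * g (2 * x))
      (fun x => (a - b) * g (2 * x)) (Set.Ioo (1 / 2) 1) := fun x hx => by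
    simp only [rademacher_zero_of_half_lt hx, mul_neg, mul_one, ← sub_eq_add_neg]
  have shift : ∫ x in (1 : ℝ)..2, g x = ∫ x in (0 : ℝ)..1, g x := by
    have := periodic.intervalIntegral_add_eq 1 0
    norm_num at this
    exact this
  rw [← intervalIntegral.integral_add_adjacent_intervals (b := 1 / 2)
      ((integrable_comp 0 (1 / 2) (a + b)).congr_uIoo (by
        rwa [Set.uIoo_of_le (by norm_num), Set.eqOn_comm]))
      ((integrable_comp (1 / 2) 1 (a - b)).congr_uIoo (by
        rwa [Set.uIoo_of_le (by norm_num), Set.eqOn_comm])),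
    intervalIntegral.integral_congr_Ioo_of_le (by norm_num) left,
    intervalIntegral.integral_congr_Ioo_of_le (by norm_num) right,
    intervalIntegral.integral_const_mul, intervalIntegral.integral_const_mul,
    intervalIntegral.integral_comp_mul_left _ two_ne_zero,
    intervalIntegral.integral_comp_mul_left _ two_ne_zero]
  norm_num [shift]
  ring

/-- The Riesz product `∏_{k < L} (a_k + b_k r_k)`. Walsh functions, their products and indicators of
dyadic intervals all have this form. -/
def rieszProd (a b : ℕ → ℝ) (L : ℕ) (x : ℝ) : ℝ :=
  ∏ k ∈ Finset.range L, (a k + b k * rademacher k x)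

lemma rieszProd_succ (a b : ℕ → ℝ) (L : ℕ) (x : ℝ) :
    rieszProd a b (L + 1) x = (a 0 + b 0 * rademacher 0 x) *
      rieszProd (fun k => a (k + 1)) (fun k => b (k + 1)) L (2 * x) := by
  simp only [rieszProd, Finset.prod_range_succ', rademacher_succ, mul_comm]

lemma rieszProd_periodic (a b : ℕ → ℝ) (L : ℕ) : Function.Periodic (rieszProd a b L) 1 := by
  intro x
  simp only [rieszProd, rademacher_periodic _ x]

@[fun_prop]
lemma measurable_rieszProd (a b : ℕ → ℝ) (L : ℕ) : Measurable (rieszProd a b L) := by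
  unfold rieszProd
  fun_prop

lemma abs_rieszProd_le (a b : ℕ → ℝ) (L : ℕ) (x : ℝ) :
    |rieszProd a b L x| ≤ ∏ k ∈ Finset.range L, (|a k| + |b k|) := by
  rw [rieszProd, Finset.abs_prod]
  refine Finset.prod_le_prod (fun _ _ => abs_nonneg _) fun k _ => (abs_add_le _ _).trans_eq ?_
  rw [abs_mul, abs_rademacher, mul_one]

lemma intervalIntegrable_rieszProd (a b : ℕ → ℝ) (L : ℕ) (u v : ℝ) :
    IntervalIntegrable (rieszProd a b L) volume u v :=
  intervalIntegrable_const.mono_fun' (measurable_rieszProd a b L).aestronglyMeasurable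
    (Eventually.of_forall fun x => abs_rieszProd_le a b L x)

lemma intervalIntegral_rieszProd (a b : ℕ → ℝ) (L : ℕ) :
    ∫ x in (0 : ℝ)..1, rieszProd a b L x = ∏ k ∈ Finset.range L, a k := by
  induction L generalizing a b with
  | zero => simp [rieszProd]
  | succ L ih =>
    simp only [rieszProd_succ]
    rw [integral_rademacher_zero_mul_comp_two_mul _ _ (rieszProd_periodic _ _ L)
      (intervalIntegrable_rieszProd _ _ L), ih, Finset.prod_range_succ', mul_comm]

lemma integral_rieszProd (a b : ℕ → ℝ) (L : ℕ) :
    ∫ x, rieszProd a b L x ∂unitMeasure = ∏ k ∈ Finset.range L, a k := by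
  rw [← intervalIntegral_rieszProd a b L, intervalIntegral.integral_of_le zero_le_one, unitMeasure,
    integral_Ico_eq_integral_Ioc]

end Rademacher

section Cube

instance : IsProbabilityMeasure unitMeasure := ⟨by simp [unitMeasure]⟩

lemma cubeMeasure_eq_pi (d : ℕ) : cubeMeasure d = Measure.pi fun _ : Fin d => unitMeasure := by
  rw [cubeMeasure, unitCube, volume_pi, Measure.restrict_pi_pi]
  rfl

instance (d : ℕ) : IsProbabilityMeasure (cubeMeasure d) := by
  rw [cubeMeasure_eq_pi]
  infer_instance

lemma integral_prod_coordinates {d : ℕ} (g : Fin d → ℝ → ℝ) :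
    ∫ x, ∏ i, g i (x i) ∂cubeMeasure d = ∏ i, ∫ t, g i t ∂unitMeasure := by
  rw [cubeMeasure_eq_pi, integral_fintype_prod_eq_prod]

lemma integral_prod_coordinates_mem {d : ℕ} (B : Finset (Fin d)) (g : B → ℝ → ℝ) :
    ∫ x, ∏ i : B, g i (x i) ∂cubeMeasure d = ∏ i, ∫ t, g i t ∂unitMeasure := by
  have extend (G : B → ℝ) : ∏ i, G i = ∏ i, if h : i ∈ B then G ⟨i, h⟩ else 1 := by
    rw [← Finset.prod_attach_eq_prod_dite, Finset.univ_eq_attach]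
  have := integral_prod_coordinates fun (i : Fin d) t => if h : i ∈ B then g ⟨i, h⟩ t else 1
  simp only [extend, this]
  refine Finset.prod_congr rfl fun i _ => ?_
  split_ifs <;> simp

end Cube

section Walsh

/-- The Walsh function `w_j` as a function of the sequence of values of the Rademacher functions,
so that it can be evaluated on arbitrary digits. -/
def signWalsh (j : ℕ) (ρ : ℕ → ℝ) : ℝ :=
  ∏ k ∈ Finset.range (j + 1), if j.testBit k then ρ k else 1

lemma walsh_eq_signWalsh (j : ℕ) (x : ℝ) : walsh j x = signWalsh j (rademacher · x) := rfl

lemma signWalsh_eq_prod_range {j L : ℕ} (hj : j < 2 ^ L) (ρ : ℕ → ℝ) :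
    signWalsh j ρ = ∏ k ∈ Finset.range L, if j.testBit k then ρ k else 1 := by
  have factor_eq_one {K k : ℕ} (hK : j < 2 ^ K) (hk : k ∉ Finset.range K) :
      (if j.testBit k then ρ k else 1) = 1 := by
    have hKk : K ≤ k := by simpa using hk
    rw [Nat.testBit_lt_two_pow (hK.trans_le (Nat.pow_le_pow_right two_pos hKk))]
    simp
  have hj' : j < 2 ^ (j + 1) := (Nat.lt_succ_self j).trans Nat.lt_two_pow_self
  unfold signWalsh
  rcases le_total L (j + 1) with hL | hL
  · exact (Finset.prod_subset (Finset.range_mono hL) fun k _ => factor_eq_one hj).symm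
  · exact Finset.prod_subset (Finset.range_mono hL) fun k _ => factor_eq_one hj'

lemma signWalsh_zero (ρ : ℕ → ℝ) : signWalsh 0 ρ = 1 := by simp [signWalsh]

lemma signWalsh_mul (j : ℕ) (ρ σ : ℕ → ℝ) :
    signWalsh j (ρ * σ) = signWalsh j ρ * signWalsh j σ := by
  unfold signWalsh
  rw [← Finset.prod_mul_distrib]
  refine Finset.prod_congr rfl fun k _ => ?_
  split_ifs <;> simp

lemma signWalsh_congr {j L : ℕ} (hj : j < 2 ^ L) {ρ σ : ℕ → ℝ} (h : ∀ k < L, ρ k = σ k) :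
    signWalsh j ρ = signWalsh j σ := by
  rw [signWalsh_eq_prod_range hj, signWalsh_eq_prod_range hj]
  exact Finset.prod_congr rfl fun k hk => by rw [h k (Finset.mem_range.1 hk)]

lemma walsh_two_pow_mul (κ j : ℕ) (x : ℝ) :
    walsh (2 ^ κ * j) x = signWalsh j fun k => rademacher (κ + k) x := by
  have hj : j < 2 ^ j := Nat.lt_two_pow_self
  have hκj : 2 ^ κ * j < 2 ^ (κ + j) := by
    rw [pow_add]
    exact Nat.mul_lt_mul_of_pos_left hj (by positivity)
  have low : ∀ k ∈ Finset.range κ,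
      (if (2 ^ κ * j).testBit k then rademacher k x else 1) = 1 := fun k hk => by
    simp [Nat.testBit_two_pow_mul, Finset.mem_range.1 hk]
  rw [walsh_eq_signWalsh, signWalsh_eq_prod_range hκj, signWalsh_eq_prod_range hj,
    Finset.prod_range_add, Finset.prod_eq_one low, one_mul]
  simp [Nat.testBit_two_pow_mul]

lemma walsh_zero (x : ℝ) : walsh 0 x = 1 := signWalsh_zero _

lemma abs_walsh (j : ℕ) (x : ℝ) : |walsh j x| = 1 := by
  rw [walsh, Finset.abs_prod]
  refine Finset.prod_eq_one fun k _ => ?_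
  split_ifs
  · exact abs_rademacher k x
  · exact abs_one

@[fun_prop]
lemma measurable_walsh (j : ℕ) : Measurable (walsh j) := by
  unfold walsh
  refine Finset.measurable_fun_prod _ fun k _ => ?_
  split_ifs <;> fun_prop

lemma walsh_mul_walsh_eq_rieszProd {i j L : ℕ} (hi : i < 2 ^ L) (hj : j < 2 ^ L) (x : ℝ) :
    walsh i x * walsh j x =
      rieszProd (fun k => if i.testBit k = j.testBit k then 1 else 0)
        (fun k => if i.testBit k = j.testBit k then 0 else 1) L x := by
  rw [walsh_eq_signWalsh, walsh_eq_signWalsh, signWalsh_eq_prod_range hi,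
    signWalsh_eq_prod_range hj, ← Finset.prod_mul_distrib, rieszProd]
  refine Finset.prod_congr rfl fun k _ => ?_
  cases i.testBit k <;> cases j.testBit k <;> simp [rademacher_mul_self]

lemma integral_walsh_mul_walsh (i j : ℕ) :
    ∫ x, walsh i x * walsh j x ∂unitMeasure = if i = j then 1 else 0 := by
  have hi : i < 2 ^ (i + j) :=
    Nat.lt_two_pow_self.trans_le (Nat.pow_le_pow_right two_pos (Nat.le_add_right i j))
  have hj : j < 2 ^ (i + j) :=
    Nat.lt_two_pow_self.trans_le (Nat.pow_le_pow_right two_pos (Nat.le_add_left j i))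
  simp only [walsh_mul_walsh_eq_rieszProd hi hj, integral_rieszProd, Finset.prod_ite_zero,
    Finset.prod_const_one]
  refine if_congr ⟨fun h => Nat.eq_of_testBit_eq fun k => ?_, fun h k _ => by rw [h]⟩ rfl rfl
  by_cases hk : k < i + j
  · exact h k (Finset.mem_range.2 hk)
  · have hpow := Nat.pow_le_pow_right two_pos (not_lt.1 hk)
    rw [Nat.testBit_lt_two_pow (hi.trans_le hpow), Nat.testBit_lt_two_pow (hj.trans_le hpow)]

/-- The multiple Walsh function `x ↦ ∏ i, w_{α i}(x i)`. -/
def walshMonomial {d : ℕ} (α : Fin d → ℕ) (x : Fin d → ℝ) : ℝ := ∏ i, walsh (α i) (x i)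

lemma abs_walshMonomial {d : ℕ} (α : Fin d → ℕ) (x : Fin d → ℝ) : |walshMonomial α x| = 1 := by
  rw [walshMonomial, Finset.abs_prod]
  exact Finset.prod_eq_one fun i _ => abs_walsh _ _

@[fun_prop]
lemma measurable_walshMonomial {d : ℕ} (α : Fin d → ℕ) : Measurable (walshMonomial α) := by
  unfold walshMonomial
  fun_prop

lemma integrable_walshMonomial {d : ℕ} (α : Fin d → ℕ) :
    Integrable (walshMonomial α) (cubeMeasure d) :=
  .of_bound (by fun_prop) 1 (.of_forall fun x => (abs_walshMonomial α x).le)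

lemma walshCoef_walshMonomial {d : ℕ} (α β : Fin d → ℕ) :
    walshCoef (walshMonomial α) β = if α = β then 1 else 0 := by
  simp only [walshCoef, walshMonomial, ← Finset.prod_mul_distrib]
  rw [integral_prod_coordinates fun i t => walsh (α i) t * walsh (β i) t]
  simp only [integral_walsh_mul_walsh, Finset.prod_ite_zero, Finset.prod_const_one,
    Finset.mem_univ, true_imp_iff, funext_iff]

/-- The exponent that equals `α` on `B` and vanishes elsewhere. -/
def extendZero {d : ℕ} {B : Finset (Fin d)} (α : B → ℕ) (i : Fin d) : ℕ :=
  if h : i ∈ B then α ⟨i, h⟩ else 0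

lemma walshMonomial_extendZero {d : ℕ} {B : Finset (Fin d)} (α : B → ℕ) (x : Fin d → ℝ) :
    walshMonomial (extendZero α) x = ∏ i, walsh (α i) (x i) := by
  rw [Finset.univ_eq_attach, Finset.prod_attach_eq_prod_dite B fun i => walsh (α i) (x i)]
  refine Finset.prod_congr rfl fun i _ => ?_
  unfold extendZero
  split_ifs <;> simp [walsh_zero]

end Walsh

section LogSum

-- The term `k = 0` contributes `1 / 0 = 0`.
lemma logSum_eq_sum_range (n : ℕ) : logSum n = ∑ k ∈ Finset.range n, (1 : ℝ) / k := by
  refine Finset.sum_subset (fun k hk => ?_) fun k hk hk' => ?_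
  · simp only [Finset.mem_Icc, Finset.mem_range] at *
    omega
  · obtain rfl : k = 0 := by
      simp only [Finset.mem_Icc, Finset.mem_range] at *
      omega
    simp

lemma logSum_zero : logSum 0 = 0 := by simp [logSum]

lemma logSum_pos {n : ℕ} (hn : 2 ≤ n) : 0 < logSum n := by
  refine Finset.sum_pos (fun i hi => ?_) ⟨1, by simp; omega⟩
  have : 0 < i := (Finset.mem_Icc.1 hi).1
  positivity

lemma tendsto_logSum_atTop : Tendsto logSum atTop atTop := by
  simp_rw [funext logSum_eq_sum_range]
  exact (not_summable_iff_tendsto_nat_atTop_of_nonneg fun i => by positivity).1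
    Real.not_summable_one_div_natCast

lemma logSum_sub_eq_sum_Ico {m n : ℕ} (hmn : m ≤ n) :
    logSum n - logSum m = ∑ k ∈ Finset.Ico m n, (1 : ℝ) / k := by
  rw [logSum_eq_sum_range, logSum_eq_sum_range, Finset.sum_Ico_eq_sub _ hmn]

lemma logSum_mono : Monotone logSum := fun m n hmn => by
  rw [← sub_nonneg, logSum_sub_eq_sum_Ico hmn]
  positivity

lemma logSum_sub_le {m n : ℕ} (hm : 0 < m) (hmn : m ≤ n) : logSum n - logSum m ≤ n / m := by
  rw [logSum_sub_eq_sum_Ico hmn]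
  calc ∑ k ∈ Finset.Ico m n, (1 : ℝ) / k
      ≤ ∑ _k ∈ Finset.Ico m n, (1 : ℝ) / m := by
        gcongr with k hk
        exact (Finset.mem_Ico.1 hk).1
    _ = (n - m : ℕ) / m := by simp [div_eq_mul_inv]
    _ ≤ n / m := by
        gcongr
        exact Nat.sub_le n m

lemma tendsto_logSum_two_pow_mul_div {a n : ℕ} (ha : 0 < a) (han : a ≤ n) :
    Tendsto (fun κ : ℕ => logSum (2 ^ κ * a) / logSum (2 ^ κ * n)) atTop (nhds 1) := by
  have hn : 0 < n := ha.trans_le han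
  have atTop_n : Tendsto (fun κ : ℕ => logSum (2 ^ κ * n)) atTop atTop :=
    tendsto_logSum_atTop.comp (tendsto_atTop_mono (fun κ =>
      Nat.lt_two_pow_self.le.trans (Nat.le_mul_of_pos_right _ hn)) tendsto_id)
  have lower : Tendsto (fun κ : ℕ => 1 - ((n : ℝ) / a) / logSum (2 ^ κ * n)) atTop (nhds 1) := by
    simpa using tendsto_const_nhds.sub (atTop_n.const_div_atTop ((n : ℝ) / a))
  refine tendsto_of_tendsto_of_tendsto_of_le_of_le' lower tendsto_const_nhds ?_ ?_
  · filter_upwards [atTop_n.eventually_gt_atTop 0] with κ hκ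
    have gap := logSum_sub_le (Nat.mul_pos (Nat.two_pow_pos κ) ha) (Nat.mul_le_mul_left (2 ^ κ) han)
    push_cast at gap
    rw [mul_div_mul_left _ _ (by positivity)] at gap
    rw [le_div_iff₀ hκ, sub_mul, div_mul_cancel₀ _ hκ.ne']
    linarith
  · filter_upwards [atTop_n.eventually_gt_atTop 0] with κ hκ
    exact (div_le_one hκ).2 (logSum_mono (Nat.mul_le_mul_left _ han))

end LogSum

section MixedLogMean

variable {d : ℕ} (B : Finset (Fin d))

lemma integrable_mul_walshMonomial {f : (Fin d → ℝ) → ℝ} (hf : Integrable f (cubeMeasure d))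
    (α : Fin d → ℕ) : Integrable (fun x => f x * walshMonomial α x) (cubeMeasure d) :=
  hf.mul_bdd (by fun_prop) (.of_forall fun x => (abs_walshMonomial α x).le)

lemma walshCoef_add {f g : (Fin d → ℝ) → ℝ} (hf : Integrable f (cubeMeasure d))
    (hg : Integrable g (cubeMeasure d)) (j : Fin d → ℕ) :
    walshCoef (f + g) j = walshCoef f j + walshCoef g j := by
  have := integral_add (integrable_mul_walshMonomial hf j) (integrable_mul_walshMonomial hg j)
  simpa only [walshCoef, walshMonomial, Pi.add_apply, add_mul] using this

lemma walshCoef_smul (c : ℝ) (f : (Fin d → ℝ) → ℝ) (j : Fin d → ℕ) :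
    walshCoef (c • f) j = c * walshCoef f j := by
  simp only [walshCoef, Pi.smul_apply, smul_eq_mul, mul_assoc, integral_const_mul]

lemma mixedLogMean_add {f g : (Fin d → ℝ) → ℝ} (hf : Integrable f (cubeMeasure d))
    (hg : Integrable g (cubeMeasure d)) (n : Fin d → ℕ) :
    mixedLogMean B (f + g) n = mixedLogMean B f n + mixedLogMean B g n := by
  funext x
  simp only [mixedLogMean, rectPartialSum, walshCoef_add hf hg, add_mul, add_div,
    Finset.sum_add_distrib, mul_add, Pi.add_apply]

lemma mixedLogMean_smul (c : ℝ) (f : (Fin d → ℝ) → ℝ) (n : Fin d → ℕ) :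
    mixedLogMean B (c • f) n = c • mixedLogMean B f n := by
  funext x
  simp only [mixedLogMean, rectPartialSum, walshCoef_smul, mul_assoc, Pi.smul_apply, smul_eq_mul,
    ← Finset.mul_sum, mul_div_assoc]
  ring

lemma mixedLogMean_sum {ι : Type*} (s : Finset ι) (c : ι → ℝ) (f : ι → (Fin d → ℝ) → ℝ)
    (hf : ∀ a ∈ s, Integrable (f a) (cubeMeasure d)) (n : Fin d → ℕ) :
    mixedLogMean B (∑ a ∈ s, c a • f a) n = ∑ a ∈ s, c a • mixedLogMean B (f a) n := by
  classical
  induction s using Finset.induction_on with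
  | empty => simpa using mixedLogMean_smul B 0 0 n
  | insert a s ha ih =>
    have hs : ∀ a ∈ s, Integrable (f a) (cubeMeasure d) :=
      fun a ha => hf a (Finset.mem_insert_of_mem ha)
    rw [Finset.sum_insert ha, Finset.sum_insert ha,
      mixedLogMean_add B ((hf a (Finset.mem_insert_self a s)).smul (c a))
        (integrable_finsetSum' _ fun a ha => (hs a ha).smul (c a)), mixedLogMean_smul, ih hs]

lemma abs_walshCoef_le (f : (Fin d → ℝ) → ℝ) (j : Fin d → ℕ) :
    |walshCoef f j| ≤ ∫ x, |f x| ∂cubeMeasure d := by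
  refine abs_integral_le_integral_abs.trans_eq (integral_congr_ae (.of_forall fun x => ?_))
  change |f x * walshMonomial j x| = |f x|
  rw [abs_mul, abs_walshMonomial, mul_one]

lemma abs_rectPartialSum_le (f : (Fin d → ℝ) → ℝ) (N : Fin d → ℕ) (x : Fin d → ℝ) :
    |rectPartialSum f N x| ≤ (∏ i, (N i : ℝ)) * ∫ x, |f x| ∂cubeMeasure d := by
  calc |rectPartialSum f N x|
      ≤ ∑ j ∈ Fintype.piFinset fun i => Finset.range (N i), |walshCoef f j * walshMonomial j x| :=
        Finset.abs_sum_le_sum_abs _ _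
    _ ≤ ∑ _j ∈ Fintype.piFinset fun i => Finset.range (N i), ∫ x, |f x| ∂cubeMeasure d := by
        gcongr with j
        rw [abs_mul, abs_walshMonomial, mul_one]
        exact abs_walshCoef_le f j
    _ = _ := by simp

lemma exists_abs_mixedLogMean_le (n : Fin d → ℕ) : ∃ C : ℝ, 0 ≤ C ∧ ∀ f : (Fin d → ℝ) → ℝ, ∀ x,
    |mixedLogMean B f n x| ≤ C * ∫ x, |f x| ∂cubeMeasure d := by
  refine ⟨|(∏ j, logSum (n j))⁻¹| * ∑ i ∈ Fintype.piFinset fun j => Finset.Ico 1 (n j),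
    (∏ j, ((if j ∈ B then n j - i j else i j : ℕ) : ℝ)) / |∏ j, (i j : ℝ)|, by positivity,
    fun f x => ?_⟩
  rw [mixedLogMean, abs_mul, mul_assoc, Finset.sum_mul]
  gcongr
  refine (Finset.abs_sum_le_sum_abs _ _).trans (Finset.sum_le_sum fun i _ => ?_)
  rw [abs_div, div_mul_eq_mul_div]
  gcongr
  exact abs_rectPartialSum_le f _ x

lemma rectPartialSum_walshMonomial (α N : Fin d → ℕ) (x : Fin d → ℝ) :
    rectPartialSum (walshMonomial α) N x =
      (∏ i, if α i < N i then 1 else 0) * walshMonomial α x := by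
  simp only [rectPartialSum, walshCoef_walshMonomial, ite_mul, one_mul, zero_mul,
    Finset.sum_ite_eq, Fintype.mem_piFinset, Finset.mem_range, Finset.prod_ite_zero,
    Finset.prod_const_one, Finset.mem_univ, true_imp_iff, walshMonomial]

lemma sum_norlund_weights (n a : ℕ) :
    ∑ i ∈ Finset.Ico 1 n, (if a < n - i then 1 else 0 : ℝ) / i = logSum (n - a) := by
  simp only [ite_div, zero_div, ← Finset.sum_filter, logSum]
  refine Finset.sum_congr ?_ fun _ _ => rfl
  ext i
  simp only [Finset.mem_filter, Finset.mem_Ico, Finset.mem_Icc]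
  omega

lemma sum_riesz_weights_zero (n : ℕ) :
    ∑ i ∈ Finset.Ico 1 n, (if 0 < i then 1 else 0 : ℝ) / i = logSum n := by
  rw [← Nat.sub_zero n, ← sum_norlund_weights n 0, Nat.sub_zero]
  refine Finset.sum_congr rfl fun i hi => ?_
  have hi := Finset.mem_Ico.1 hi
  rw [if_pos (Nat.pos_of_ne_zero (by omega)), if_pos (Nat.sub_pos_of_lt hi.2)]

lemma mixedLogMean_walshMonomial_extendZero (α : B → ℕ) {n : Fin d → ℕ}
    (hn : ∀ j ∉ B, 2 ≤ n j) (x : Fin d → ℝ) :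
    mixedLogMean B (walshMonomial (extendZero α)) n x =
      ∏ i : B, logSum (n i - α i) / logSum (n i) * walsh (α i) (x i) := by
  have weights (j : Fin d) :
      ∑ i ∈ Finset.Ico 1 (n j),
        (if extendZero α j < (if j ∈ B then n j - i else i) then 1 else 0 : ℝ) / i =
      logSum (n j - extendZero α j) := by
    by_cases hj : j ∈ B
    · simp only [hj, if_true, sum_norlund_weights]
    · simpa only [extendZero, hj, dif_neg, if_false, not_false_eq_true, Nat.sub_zero] using
        sum_riesz_weights_zero (n j)
  have ratio : ∏ j, logSum (n j - extendZero α j) / logSum (n j) =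
      ∏ i : B, logSum (n i - α i) / logSum (n i) := by
    rw [Finset.univ_eq_attach,
      Finset.prod_attach_eq_prod_dite B fun i => logSum (n i - α i) / logSum (n i)]
    refine Finset.prod_congr rfl fun j _ => ?_
    unfold extendZero
    split_ifs with hj
    · rfl
    · exact div_self (logSum_pos (hn j hj)).ne'
  simp only [mixedLogMean, rectPartialSum_walshMonomial, mul_div_right_comm, ← Finset.sum_mul,
    ← Finset.prod_div_distrib]
  rw [Finset.prod_mul_distrib, ← walshMonomial_extendZero, ← ratio, Finset.prod_div_distrib,
    ← Finset.prod_congr rfl fun j _ => weights j, Finset.prod_univ_sum]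
  ring

lemma mixedLogMean_prod_sum_walsh {ι : Type*} (T : Finset ι) (ω : ι → ℕ) (u : B → ι → ℝ)
    {n : Fin d → ℕ} (hn : ∀ j ∉ B, 2 ≤ n j) (x : Fin d → ℝ) :
    mixedLogMean B (fun x => ∏ i : B, ∑ l ∈ T, u i l * walsh (ω l) (x i)) n x =
      ∏ i : B, ∑ l ∈ T, u i l * (logSum (n i - ω l) / logSum (n i) * walsh (ω l) (x i)) := by
  classical
  have expand : (fun x : Fin d → ℝ => ∏ i : B, ∑ l ∈ T, u i l * walsh (ω l) (x i)) =
      ∑ l ∈ Fintype.piFinset fun _ : B => T,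
        (∏ i, u i (l i)) • walshMonomial (extendZero fun i => ω (l i)) := by
    funext x
    simp only [Finset.prod_univ_sum, Finset.prod_mul_distrib, Finset.sum_apply, Pi.smul_apply,
      smul_eq_mul, walshMonomial_extendZero]
  rw [expand, mixedLogMean_sum B _ _ _ fun l _ => integrable_walshMonomial _]
  simp only [Finset.sum_apply, Pi.smul_apply, smul_eq_mul,
    mixedLogMean_walshMonomial_extendZero B _ hn, Finset.prod_univ_sum, Finset.prod_mul_distrib]

end MixedLogMean

section SignDirichlet

/-- The Walsh–Dirichlet kernel `D_n` as a function of the values of the Rademacher functions. -/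
def signDirichlet (n : ℕ) (ρ : ℕ → ℝ) : ℝ := ∑ j ∈ Finset.range n, signWalsh j ρ

lemma signWalsh_two_pow_add {a j : ℕ} (hj : j < 2 ^ a) (ρ : ℕ → ℝ) :
    signWalsh (2 ^ a + j) ρ = ρ a * signWalsh j ρ := by
  have hlt : 2 ^ a + j < 2 ^ (a + 1) := by rw [pow_succ]; omega
  have top : (2 ^ a + j).testBit a = true := by
    rw [Nat.testBit_two_pow_add_eq, Nat.testBit_lt_two_pow hj, Bool.not_false]
  rw [signWalsh_eq_prod_range hlt, signWalsh_eq_prod_range hj, Finset.prod_range_succ, top,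
    if_pos rfl, mul_comm]
  congr 1
  refine Finset.prod_congr rfl fun k hk => ?_
  rw [Nat.testBit_two_pow_add_gt (Finset.mem_range.1 hk)]

lemma signDirichlet_two_pow_add {a n : ℕ} (hn : n ≤ 2 ^ a) (ρ : ℕ → ℝ) :
    signDirichlet (2 ^ a + n) ρ = signDirichlet (2 ^ a) ρ + ρ a * signDirichlet n ρ := by
  simp only [signDirichlet, Finset.sum_range_add, Finset.mul_sum]
  congr 1
  exact Finset.sum_congr rfl fun j hj =>
    signWalsh_two_pow_add ((Finset.mem_range.1 hj).trans_le hn) ρ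

lemma signDirichlet_two_pow (a : ℕ) (ρ : ℕ → ℝ) :
    signDirichlet (2 ^ a) ρ = ∏ k ∈ Finset.range a, (1 + ρ k) := by
  induction a with
  | zero => simp [signDirichlet, signWalsh_zero]
  | succ a ih =>
    rw [pow_succ, mul_two, signDirichlet_two_pow_add le_rfl, ih, Finset.prod_range_succ]
    ring

lemma signDirichlet_two_pow_of_eq_one {a : ℕ} {ρ : ℕ → ℝ} (h : ∀ k < a, ρ k = 1) :
    signDirichlet (2 ^ a) ρ = 2 ^ a := by
  rw [signDirichlet_two_pow, Finset.prod_congr rfl fun k hk => by rw [h k (Finset.mem_range.1 hk)]]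
  norm_num

lemma signDirichlet_two_pow_of_eq_neg_one {a k : ℕ} {ρ : ℕ → ℝ} (hk : k < a) (h : ρ k = -1) :
    signDirichlet (2 ^ a) ρ = 0 := by
  rw [signDirichlet_two_pow]
  exact Finset.prod_eq_zero (Finset.mem_range.2 hk) (by rw [h]; norm_num)

lemma signDirichlet_of_eq_one {n : ℕ} {ρ : ℕ → ℝ} {L : ℕ} (hn : n ≤ 2 ^ L) (h : ∀ k < L, ρ k = 1) :
    signDirichlet n ρ = n := by
  have factor (j : ℕ) (hj : j ∈ Finset.range n) : signWalsh j ρ = 1 := by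
    rw [signWalsh_eq_prod_range ((Finset.mem_range.1 hj).trans_le hn)]
    exact Finset.prod_eq_one fun k hk => by rw [h k (Finset.mem_range.1 hk), ite_self]
  rw [signDirichlet, Finset.sum_congr rfl factor]
  simp

end SignDirichlet

section Digits

variable {d M : ℕ}

/-- The values `(-1)^(c k)` of the Rademacher functions at a point with binary digits `c`, continued
by `1` beyond the last digit. -/
def boolSign (c : Fin M → Bool) (k : ℕ) : ℝ :=
  if h : k < M then (if c ⟨k, h⟩ then -1 else 1) else 1

/-- The binary digits of `x` in the positions `κ, …, κ + M - 1`, counted from zero. -/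
def digits (κ M : ℕ) (x : ℝ) (k : Fin M) : Bool := decide (rademacher (κ + k) x = -1)

/-- The digits in the positions `κ, …, κ + M - 1` of all the coordinates in `B`. -/
def blockDigits (B : Finset (Fin d)) (κ M : ℕ) (x : Fin d → ℝ) : B → Fin M → Bool :=
  fun i => digits κ M (x i)

lemma boolSign_apply (c : Fin M → Bool) (k : Fin M) : boolSign c k = if c k then -1 else 1 := by
  simp [boolSign]

lemma boolSign_mul_boolSign (c y : Fin M → Bool) (k : Fin M) :
    boolSign c k * boolSign y k = if c k = y k then 1 else -1 := by
  rw [boolSign_apply, boolSign_apply]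
  cases c k <;> cases y k <;> norm_num

lemma boolSign_digits (κ : ℕ) (x : ℝ) {k : ℕ} (hk : k < M) :
    boolSign (digits κ M x) k = rademacher (κ + k) x := by
  rcases rademacher_eq_one_or (κ + k) x with h | h
  · norm_num [boolSign, digits, hk, h]
  · simp [boolSign, digits, hk, h]

lemma walsh_two_pow_mul_eq_digits {κ l : ℕ} (hl : l < 2 ^ M) (x : ℝ) :
    walsh (2 ^ κ * l) x = signWalsh l (boolSign (digits κ M x)) := by
  rw [walsh_two_pow_mul]
  exact signWalsh_congr hl fun k hk => (boolSign_digits κ x hk).symm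

@[fun_prop]
lemma measurable_digits (κ M : ℕ) : Measurable (digits κ M) := by
  refine measurable_pi_lambda _ fun k => measurable_to_bool ?_
  have : (fun x => digits κ M x k) ⁻¹' {true} = rademacher (κ + k) ⁻¹' {-1} := by
    ext x
    simp [digits]
  rw [this]
  exact measurable_rademacher _ (measurableSet_singleton _)

@[fun_prop]
lemma measurable_blockDigits (B : Finset (Fin d)) (κ M : ℕ) : Measurable (blockDigits B κ M) :=
  measurable_pi_lambda _ fun i => (measurable_digits κ M).comp (measurable_pi_apply (i : Fin d))

lemma signDirichlet_two_pow_boolSign_mul (c y : Fin M → Bool) :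
    signDirichlet (2 ^ M) (boolSign c * boolSign y) = if y = c then 2 ^ M else 0 := by
  have factor (k : Fin M) : 1 + (boolSign c * boolSign y) k = if y k = c k then 2 else 0 := by
    rw [Pi.mul_apply, boolSign_mul_boolSign]
    cases c k <;> cases y k <;> norm_num
  rw [signDirichlet_two_pow, Finset.prod_range]
  simp only [factor, Finset.prod_ite_zero, Finset.prod_const, Finset.card_univ, Fintype.card_fin,
    Finset.mem_univ, true_imp_iff, funext_iff]

lemma indicator_digits_eq_sum_walsh (κ : ℕ) (c : Fin M → Bool) (x : ℝ) :
    (if digits κ M x = c then 1 else 0 : ℝ) =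
      ∑ l ∈ Finset.range (2 ^ M), (2 ^ M)⁻¹ * signWalsh l (boolSign c) * walsh (2 ^ κ * l) x := by
  calc (if digits κ M x = c then 1 else 0 : ℝ)
      = (2 ^ M)⁻¹ * signDirichlet (2 ^ M) (boolSign c * boolSign (digits κ M x)) := by
        rw [signDirichlet_two_pow_boolSign_mul]
        split_ifs <;> simp
    _ = _ := by
        rw [signDirichlet, Finset.mul_sum]
        refine Finset.sum_congr rfl fun l hl => ?_
        rw [signWalsh_mul, walsh_two_pow_mul_eq_digits (Finset.mem_range.1 hl), mul_assoc]

lemma integral_walsh (j : ℕ) : ∫ x, walsh j x ∂unitMeasure = if j = 0 then 1 else 0 := by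
  simpa only [walsh_zero, mul_one] using integral_walsh_mul_walsh j 0

lemma integrable_walsh (j : ℕ) : Integrable (walsh j) unitMeasure :=
  .of_bound (by fun_prop) 1 (.of_forall fun x => (abs_walsh j x).le)

lemma integral_indicator_digits (κ : ℕ) (c : Fin M → Bool) :
    ∫ x, (if digits κ M x = c then 1 else 0 : ℝ) ∂unitMeasure = (2 ^ M)⁻¹ := by
  simp only [indicator_digits_eq_sum_walsh]
  rw [integral_finsetSum _ fun l _ => (integrable_walsh _).const_mul _]
  simp only [integral_const_mul, integral_walsh, mul_eq_zero, pow_eq_zero_iff', OfNat.ofNat_ne_zero,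
    false_and, false_or, mul_ite, mul_one, mul_zero, Finset.sum_ite_eq', Finset.mem_range,
    Nat.two_pow_pos, if_true, signWalsh_zero]

variable (B : Finset (Fin d))

lemma indicator_blockDigits_eq_prod (κ : ℕ) (c : B → Fin M → Bool) (x : Fin d → ℝ) :
    (if blockDigits B κ M x = c then 1 else 0 : ℝ) =
      ∏ i : B, if digits κ M (x i) = c i then 1 else 0 := by
  simp only [Finset.prod_ite_zero, Finset.prod_const_one, Finset.mem_univ, true_imp_iff,
    funext_iff (f := blockDigits B κ M x), blockDigits]

lemma integrable_comp_blockDigits (κ : ℕ) (F : (B → Fin M → Bool) → ℝ) :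
    Integrable (fun x => F (blockDigits B κ M x)) (cubeMeasure d) :=
  .of_bound ((measurable_of_finite F).comp (measurable_blockDigits B κ M)).aestronglyMeasurable
    (∑ c, |F c|) (.of_forall fun _ =>
      Finset.single_le_sum (f := fun c => |F c|) (fun _ _ => abs_nonneg _) (Finset.mem_univ _))

lemma integral_comp_blockDigits (κ : ℕ) (F : (B → Fin M → Bool) → ℝ) :
    ∫ x, F (blockDigits B κ M x) ∂cubeMeasure d = (∑ c, F c) / 2 ^ (M * B.card) := by
  have cell (c : B → Fin M → Bool) :
      ∫ x, (if blockDigits B κ M x = c then 1 else 0 : ℝ) ∂cubeMeasure d =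
        (2 ^ (M * B.card))⁻¹ := by
    simp only [indicator_blockDigits_eq_prod]
    rw [integral_prod_coordinates_mem B fun i t => if digits κ M t = c i then 1 else 0]
    simp [integral_indicator_digits, pow_mul]
  calc ∫ x, F (blockDigits B κ M x) ∂cubeMeasure d
      = ∫ x, ∑ c, F c * (if blockDigits B κ M x = c then 1 else 0 : ℝ) ∂cubeMeasure d := by simp
    _ = ∑ c, F c * (2 ^ (M * B.card))⁻¹ := by
        rw [integral_finsetSum _ fun c _ => (integrable_comp_blockDigits B κ
          fun c' => if c' = c then 1 else 0).const_mul _]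
        simp only [integral_const_mul, cell]
    _ = _ := by rw [← Finset.sum_mul, div_eq_mul_inv]

lemma measureReal_blockDigits_mem (κ : ℕ) (p : (B → Fin M → Bool) → Prop) [DecidablePred p] :
    (cubeMeasure d).real {x | p (blockDigits B κ M x)} =
      (Finset.univ.filter p).card / 2 ^ (M * B.card) := by
  have measurable : MeasurableSet {x | p (blockDigits B κ M x)} :=
    measurable_blockDigits B κ M (Set.toFinite {c | p c}).measurableSet
  rw [← integral_indicator_one measurable]
  have := integral_comp_blockDigits B κ fun c => if p c then (1 : ℝ) else 0
  simpa [Set.indicator_apply] using this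

end Digits

section DilatedMean

variable {d M : ℕ} {B : Finset (Fin d)}

/-- The mixed logarithmic mean of order `2^κ n` of a function `F` of the digits in the positions
`κ, …, κ + M - 1` of the variables in `B`, as a function of these digits. -/
def dilatedMean (κ n : ℕ) (F : (B → Fin M → Bool) → ℝ) (y : B → Fin M → Bool) : ℝ :=
  ∑ c, F c * ∏ i, ∑ l ∈ Finset.range (2 ^ M), (2 ^ M)⁻¹ *
    (logSum (2 ^ κ * (n - l)) / logSum (2 ^ κ * n) * signWalsh l (boolSign (c i) * boolSign (y i)))

/-- The `n`-th cubic Walsh–Fourier partial sum of a function on the dyadic group `(Fin M → Bool)^B`,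
written as the convolution with a product of Dirichlet kernels. -/
def dyadicPartialSum (n : ℕ) (F : (B → Fin M → Bool) → ℝ) (y : B → Fin M → Bool) : ℝ :=
  ∑ c, F c * ∏ i, (2 ^ M)⁻¹ * signDirichlet n (boolSign (c i) * boolSign (y i))

lemma mixedLogMean_comp_blockDigits {κ n : ℕ} (hn : 2 ≤ 2 ^ κ * n) (F : (B → Fin M → Bool) → ℝ)
    (x : Fin d → ℝ) :
    mixedLogMean B (fun x => F (blockDigits B κ M x)) (fun _ => 2 ^ κ * n) x =
      dilatedMean κ n F (blockDigits B κ M x) := by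
  have expand : (fun x => F (blockDigits B κ M x)) =
      ∑ c, F c • fun x => (if blockDigits B κ M x = c then 1 else 0 : ℝ) := by
    funext x
    simp
  rw [expand, mixedLogMean_sum B _ _ _ fun c _ => integrable_comp_blockDigits B κ
    fun c' => if c' = c then 1 else 0]
  simp only [indicator_blockDigits_eq_prod, indicator_digits_eq_sum_walsh, Finset.sum_apply,
    Pi.smul_apply, smul_eq_mul]
  refine Finset.sum_congr rfl fun c _ => ?_
  rw [mixedLogMean_prod_sum_walsh B _ (fun l => 2 ^ κ * l)
    (fun i l => (2 ^ M)⁻¹ * signWalsh l (boolSign (c i))) fun _ _ => hn]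
  congr 1
  refine Finset.prod_congr rfl fun i _ => Finset.sum_congr rfl fun l hl => ?_
  rw [walsh_two_pow_mul_eq_digits (Finset.mem_range.1 hl), signWalsh_mul, ← Nat.mul_sub,
    blockDigits]
  ring

lemma tendsto_dilatedMean {n : ℕ} (hn : n ≤ 2 ^ M) (F : (B → Fin M → Bool) → ℝ)
    (y : B → Fin M → Bool) :
    Tendsto (fun κ => dilatedMean κ n F y) atTop (nhds (dyadicPartialSum n F y)) := by
  have multiplier (l : ℕ) : Tendsto (fun κ => logSum (2 ^ κ * (n - l)) / logSum (2 ^ κ * n)) atTop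
      (nhds (if l < n then 1 else 0)) := by
    split_ifs with hl
    · exact tendsto_logSum_two_pow_mul_div (Nat.sub_pos_of_lt hl) (Nat.sub_le n l)
    · simp [Nat.sub_eq_zero_of_le (not_lt.1 hl), logSum_zero]
  have truncate (ρ : ℕ → ℝ) : (2 ^ M)⁻¹ * signDirichlet n ρ =
      ∑ l ∈ Finset.range (2 ^ M), (2 ^ M)⁻¹ * ((if l < n then 1 else 0) * signWalsh l ρ) := by
    have : (Finset.range (2 ^ M)).filter (· < n) = Finset.range n := by
      ext l
      simp only [Finset.mem_filter, Finset.mem_range]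
      omega
    simp only [← Finset.mul_sum, ite_mul, one_mul, zero_mul, ← Finset.sum_filter, this,
      signDirichlet]
  simp only [dilatedMean, dyadicPartialSum, truncate]
  exact tendsto_finsetSum _ fun c _ => (tendsto_finsetProd _ fun i _ => tendsto_finsetSum _
    fun l _ => ((multiplier l).mul_const _).const_mul _).const_mul _

end DilatedMean

section KernelSize

lemma pIdx_succ (A : ℕ) : pIdx (A + 1) = 2 ^ (2 * (A + 1)) + pIdx A := by
  rw [pIdx, Finset.sum_range_succ, pow_mul, add_comm]
  rfl

lemma pIdx_lt (A : ℕ) : pIdx A < 2 ^ (2 * A + 1) := by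
  induction A with
  | zero => simp [pIdx]
  | succ A ih =>
    rw [pIdx_succ, show 2 * (A + 1) = 2 * A + 1 + 1 by ring]
    simp only [pow_succ] at *
    omega

lemma two_pow_le_pIdx (A : ℕ) : 2 ^ (2 * A) ≤ pIdx A := by
  cases A with
  | zero => simp [pIdx]
  | succ A =>
    rw [pIdx_succ]
    omega

-- Powers `2^(2j)` with `2j > m` are killed by `1 + ρ m = 0`; since every second power of two is
-- missing from `pIdx A`, the remaining terms cannot cancel.
lemma two_pow_half_le_abs_signDirichlet_pIdx {A m : ℕ} (hm : m ≤ 2 * A) {ρ : ℕ → ℝ}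
    (abs_one : ∀ k, |ρ k| = 1) (below : ∀ k < m, ρ k = 1) (at_m : ρ m = -1) :
    (2 : ℝ) ^ m / 2 ≤ |signDirichlet (pIdx A) ρ| := by
  induction A with
  | zero =>
    obtain rfl : m = 0 := by omega
    norm_num [pIdx, signDirichlet, signWalsh_zero]
  | succ A ih =>
    have hle : pIdx A ≤ 2 ^ (2 * (A + 1)) :=
      (pIdx_lt A).le.trans (Nat.pow_le_pow_right two_pos (by omega))
    rw [pIdx_succ, signDirichlet_two_pow_add hle]
    rcases Nat.lt_or_ge m (2 * (A + 1)) with hlt | hge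
    · rw [signDirichlet_two_pow_of_eq_neg_one hlt at_m, zero_add, abs_mul, abs_one, one_mul]
      rcases Nat.lt_or_ge m (2 * A + 1) with hlt' | hge'
      · exact ih (by omega)
      · obtain rfl : m = 2 * A + 1 := by omega
        have lower : ((2 ^ (2 * A) : ℕ) : ℝ) ≤ pIdx A := by exact_mod_cast two_pow_le_pIdx A
        rw [signDirichlet_of_eq_one (pIdx_lt A).le below, Nat.abs_cast, pow_succ]
        push_cast at lower
        linarith
    · obtain rfl : m = 2 * (A + 1) := by omega
      have upper : (pIdx A : ℝ) ≤ ((2 ^ (2 * A + 1) : ℕ) : ℝ) := by exact_mod_cast (pIdx_lt A).le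
      rw [signDirichlet_two_pow_of_eq_one below, signDirichlet_of_eq_one hle below, at_m]
      refine le_trans ?_ (le_abs_self _)
      push_cast at upper
      rw [show 2 * (A + 1) = 2 * A + 1 + 1 by ring, pow_succ]
      linarith

/-- The digit strings that agree with `y` before position `m` and differ from it there. -/
def firstDiff {M : ℕ} (y : Fin M → Bool) (m : ℕ) : Finset (Fin M → Bool) :=
  Fintype.piFinset fun k => if (k : ℕ) < m then {y k} else if (k : ℕ) = m then {!y k} else .univ

variable {M m : ℕ} {y c : Fin M → Bool}

lemma eq_of_mem_firstDiff (hc : c ∈ firstDiff y m) {k : Fin M} (hk : (k : ℕ) < m) : c k = y k := by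
  simpa [hk] using Fintype.mem_piFinset.1 hc k

lemma ne_of_mem_firstDiff (hc : c ∈ firstDiff y m) {k : Fin M} (hk : (k : ℕ) = m) : c k ≠ y k := by
  have : c k = !y k := by simpa [hk] using Fintype.mem_piFinset.1 hc k
  simp [this]

lemma card_firstDiff_mul (hm : m < M) : (firstDiff y m).card * (2 ^ m * 2) = 2 ^ M := by
  have factor (k : Fin M) : (if (k : ℕ) < m then {y k} else if (k : ℕ) = m then {!y k} else
      Finset.univ : Finset Bool).card * (if (k : ℕ) < m + 1 then 2 else 1) = 2 := by
    split_ifs <;> first | rfl | omega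
  have half : ∏ k : Fin M, (if (k : ℕ) < m + 1 then 2 else 1) = 2 ^ (m + 1) := by
    rw [Fin.prod_univ_eq_prod_range (fun k => if k < m + 1 then 2 else 1) M, ← Finset.prod_filter,
      show (Finset.range M).filter (· < m + 1) = Finset.range (m + 1) by grind]
    simp
  rw [← pow_succ, ← half, firstDiff, Fintype.card_piFinset, ← Finset.prod_mul_distrib,
    Finset.prod_congr rfl fun k _ => factor k]
  simp

lemma eq_of_mem_firstDiff_of_mem_firstDiff {m' : ℕ} (hm : m < M) (hm' : m' < M)
    (hc : c ∈ firstDiff y m) (hc' : c ∈ firstDiff y m') : m = m' := by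
  rcases lt_trichotomy m m' with hlt | heq | hlt
  · exact absurd (eq_of_mem_firstDiff (k := ⟨m, hm⟩) hc' hlt) (ne_of_mem_firstDiff hc rfl)
  · exact heq
  · exact absurd (eq_of_mem_firstDiff (k := ⟨m', hm'⟩) hc hlt) (ne_of_mem_firstDiff hc' rfl)

lemma abs_boolSign (c : Fin M → Bool) (k : ℕ) : |boolSign c k| = 1 := by
  unfold boolSign
  split_ifs <;> simp

lemma two_pow_half_le_abs_signDirichlet_of_mem_firstDiff {A : ℕ} (hm : m ≤ 2 * A) (hA : 2 * A < M)
    (hc : c ∈ firstDiff y m) :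
    (2 : ℝ) ^ m / 2 ≤ |signDirichlet (pIdx A) (boolSign c * boolSign y)| := by
  refine two_pow_half_le_abs_signDirichlet_pIdx hm (fun k => ?_) (fun k hk => ?_) ?_
  · rw [Pi.mul_apply, abs_mul, abs_boolSign, abs_boolSign, one_mul]
  · have := boolSign_mul_boolSign c y ⟨k, by omega⟩
    rwa [if_pos (eq_of_mem_firstDiff hc hk)] at this
  · have := boolSign_mul_boolSign c y ⟨m, by omega⟩
    rwa [if_neg (ne_of_mem_firstDiff hc rfl)] at this

end KernelSize

section KernelCount

variable {β : Type*} [Fintype β] {M : ℕ}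

lemma two_pow_le_abs_prod_signDirichlet {A : ℕ} (hA : 2 * A < M) {m : β → ℕ}
    (hm : ∀ i, m i ≤ 2 * A) {y c : β → Fin M → Bool} (hc : ∀ i, c i ∈ firstDiff (y i) (m i)) :
    (2 : ℝ) ^ (∑ i, m i) / 2 ^ Fintype.card β ≤
      |∏ i, signDirichlet (pIdx A) (boolSign (c i) * boolSign (y i))| := by
  calc (2 : ℝ) ^ (∑ i, m i) / 2 ^ Fintype.card β = ∏ i, (2 : ℝ) ^ m i / 2 := by
        simp [Finset.prod_div_distrib, Finset.prod_pow_eq_pow_sum]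
    _ ≤ ∏ i, |signDirichlet (pIdx A) (boolSign (c i) * boolSign (y i))| := by
        gcongr with i
        exact two_pow_half_le_abs_signDirichlet_of_mem_firstDiff (hm i) hA (hc i)
    _ = _ := (Finset.abs_prod _ _).symm

variable [DecidableEq β]

-- All but one of the coordinates can be chosen freely in `{0, …, q}`.
lemma pow_le_card_piAntidiag (i₀ : β) {q n : ℕ} (hq : (Fintype.card β - 1) * q ≤ n) :
    (q + 1) ^ (Fintype.card β - 1) ≤ (Finset.piAntidiag (.univ : Finset β) n).card := by
  have card_ne : Fintype.card {i // i ≠ i₀} = Fintype.card β - 1 := by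
    simp [Fintype.card_subtype_compl]
  have card_free : (Fintype.piFinset fun _ : {i // i ≠ i₀} => Finset.range (q + 1)).card =
      (q + 1) ^ (Fintype.card β - 1) := by
    simp only [Fintype.card_piFinset, Finset.card_range, Finset.prod_const, Finset.card_univ,
      card_ne]
  rw [← card_free]
  refine Finset.card_le_card_of_surjOn (fun m i => m i) fun m hm => ?_
  have hm (i : {i // i ≠ i₀}) : m i ≤ q :=
    Nat.lt_succ_iff.1 (Finset.mem_range.1 (Fintype.mem_piFinset.1 hm i))
  have sum_le : ∑ i, m i ≤ n := by
    calc ∑ i, m i ≤ ∑ _i : {i // i ≠ i₀}, q := Finset.sum_le_sum fun i _ => hm i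
      _ = (Fintype.card β - 1) * q := by simp [card_ne]
      _ ≤ n := hq
  let filled (i : β) : ℕ := if h : i = i₀ then n - ∑ i, m i else m ⟨i, h⟩
  have filled_ne (i : {i // i ≠ i₀}) : filled i = m i := dif_neg i.2
  refine ⟨filled, ?_, funext filled_ne⟩
  rw [Finset.mem_coe, Finset.mem_piAntidiag, Fintype.sum_eq_add_sum_subtype_ne _ i₀,
    Fintype.sum_congr _ _ filled_ne]
  exact ⟨by simp only [dif_pos]; omega, fun _ _ => Finset.mem_univ _⟩

lemma card_piFinset_firstDiff_mul {m : β → ℕ} (hm : ∀ i, m i < M) (y : β → Fin M → Bool) :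
    (Fintype.piFinset fun i => firstDiff (y i) (m i)).card * 2 ^ (∑ i, m i + Fintype.card β) =
      2 ^ (M * Fintype.card β) := by
  calc _ = ∏ i, (firstDiff (y i) (m i)).card * (2 ^ m i * 2) := by
        simp only [Fintype.card_piFinset, Finset.prod_mul_distrib, Finset.prod_pow_eq_pow_sum,
          Finset.prod_const, Finset.card_univ, pow_add]
    _ = _ := by simp [card_firstDiff_mul (hm _), pow_mul]

lemma pairwiseDisjoint_piFinset_firstDiff (y : β → Fin M → Bool) :
    {m : β → ℕ | ∀ i, m i < M}.PairwiseDisjoint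
      fun m => Fintype.piFinset fun i => firstDiff (y i) (m i) := by
  intro m hm m' hm' hne
  refine Finset.disjoint_left.2 fun c hc hc' => hne (funext fun i => ?_)
  exact eq_of_mem_firstDiff_of_mem_firstDiff (hm i) (hm' i)
    (Fintype.mem_piFinset.1 hc i) (Fintype.mem_piFinset.1 hc' i)

lemma le_card_two_pow_le_abs_prod_signDirichlet [Nonempty β] {A q : ℕ}
    (hq : Fintype.card β * q ≤ 2 * A) (hA : 2 * A < M) (y : β → Fin M → Bool) :
    (q + 1 : ℝ) ^ (Fintype.card β - 1) * 2 ^ (M * Fintype.card β) /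
        2 ^ (Fintype.card β * (q + 1)) ≤
      (Finset.univ.filter fun c : β → Fin M → Bool =>
        (2 : ℝ) ^ (Fintype.card β * q) / 2 ^ Fintype.card β ≤
          |∏ i, signDirichlet (pIdx A) (boolSign (c i) * boolSign (y i))|).card := by
  set b := Fintype.card β
  set exponents := Finset.piAntidiag (.univ : Finset β) (b * q)
  set good := Finset.univ.filter fun c : β → Fin M → Bool => (2 : ℝ) ^ (b * q) / 2 ^ b ≤
    |∏ i, signDirichlet (pIdx A) (boolSign (c i) * boolSign (y i))|
  have sum_eq {m : β → ℕ} (hm : m ∈ exponents) : ∑ i, m i = b * q :=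
    (Finset.mem_piAntidiag.1 hm).1
  have le_of_mem {m : β → ℕ} (hm : m ∈ exponents) (i : β) : m i ≤ 2 * A :=
    (Finset.single_le_sum (f := m) (fun _ _ => Nat.zero_le _) (Finset.mem_univ i)).trans
      ((sum_eq hm).trans_le hq)
  have subset : (exponents.biUnion fun m => Fintype.piFinset fun i => firstDiff (y i) (m i)) ⊆
      good := by
    refine Finset.biUnion_subset.2 fun m hm c hc => Finset.mem_filter.2 ⟨Finset.mem_univ c, ?_⟩
    have := two_pow_le_abs_prod_signDirichlet hA (le_of_mem hm) (Fintype.mem_piFinset.1 hc)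
    rwa [sum_eq hm] at this
  have count : (q + 1) ^ (b - 1) * 2 ^ (M * b) ≤ good.card * 2 ^ (b * (q + 1)) := by
    calc (q + 1) ^ (b - 1) * 2 ^ (M * b) ≤ exponents.card * 2 ^ (M * b) := by
          gcongr
          exact pow_le_card_piAntidiag (Classical.arbitrary β)
            (Nat.mul_le_mul_right q (Nat.sub_le _ 1))
      _ = ∑ m ∈ exponents,
            (Fintype.piFinset fun i => firstDiff (y i) (m i)).card * 2 ^ (b * (q + 1)) := by
          rw [← smul_eq_mul, ← Finset.sum_const]
          refine Finset.sum_congr rfl fun m hm => ?_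
          rw [← card_piFinset_firstDiff_mul (fun i => (le_of_mem hm i).trans_lt hA) y, sum_eq hm,
            mul_add, mul_one]
      _ ≤ good.card * 2 ^ (b * (q + 1)) := by
          rw [← Finset.sum_mul, ← Finset.card_biUnion
            ((pairwiseDisjoint_piFinset_firstDiff y).subset
              fun m hm i => (le_of_mem hm i).trans_lt hA)]
          gcongr
  rw [div_le_iff₀ (by positivity)]
  exact_mod_cast count

end KernelCount

section RandomSigns

variable {X C E : Type*} [Fintype C] [Fintype E]

lemma exists_mul_card_le_card_filter [Nonempty E] (V : Finset X) (P : X → E → Prop)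
    [∀ x e, Decidable (P x e)] {p : ℝ}
    (hP : ∀ x ∈ V, p * Fintype.card E ≤ (Finset.univ.filter fun e => P x e).card) :
    ∃ e, p * V.card ≤ (V.filter fun x => P x e).card := by
  have double_count : ∑ e, ((V.filter fun x => P x e).card : ℝ) =
      ∑ x ∈ V, ((Finset.univ.filter fun e => P x e).card : ℝ) := by
    exact_mod_cast (Finset.sum_card_bipartiteAbove_eq_sum_card_bipartiteBelow P).symm
  obtain ⟨e, -, he⟩ := Finset.exists_le_of_sum_le (s := Finset.univ) (f := fun _ : E => p * V.card)
    (g := fun e => ((V.filter fun x => P x e).card : ℝ)) Finset.univ_nonempty <| by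
      calc ∑ _e : E, p * V.card = ∑ _x ∈ V, p * Fintype.card E := by
            simp only [Finset.sum_const, Finset.card_univ, nsmul_eq_mul]
            ring
        _ ≤ _ := (Finset.sum_le_sum hP).trans_eq double_count.symm
  exact ⟨e, he⟩

lemma half_card_le_card_exists_hit (P : C → Prop) [DecidablePred P] {p : ℝ} {N : ℕ}
    (hP : p * Fintype.card C ≤ (Finset.univ.filter P).card) (hN : 1 ≤ N * p) :
    1 / 2 * Fintype.card (Fin N → C) ≤
      ((Finset.univ.filter fun e : Fin N → C => ∃ k, P (e k)).card : ℝ) := by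
  set misses := Finset.univ.filter fun c => ¬ P c
  have few_misses : (misses.card : ℝ) ≤ Real.exp (-p) * Fintype.card C := by
    have split : ((Finset.univ.filter P).card : ℝ) + misses.card = Fintype.card C := by
      exact_mod_cast Finset.card_filter_add_card_filter_not (s := Finset.univ) P
    nlinarith [Real.one_sub_le_exp_neg p]
  have all_miss : (Finset.univ.filter fun e : Fin N → C => ¬ ∃ k, P (e k)).card =
      misses.card ^ N := by
    rw [← Fintype.card_piFinset_const]
    congr 1
    ext e
    simp [misses]
  have split : ((Finset.univ.filter fun e : Fin N → C => ∃ k, P (e k)).card : ℝ) +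
      misses.card ^ N = Fintype.card (Fin N → C) := by
    exact_mod_cast all_miss ▸
      Finset.card_filter_add_card_filter_not (s := Finset.univ) fun e : Fin N → C => ∃ k, P (e k)
  have miss_le : (misses.card : ℝ) ^ N ≤ 1 / 2 * Fintype.card (Fin N → C) := by
    calc (misses.card : ℝ) ^ N ≤ (Real.exp (-p) * Fintype.card C) ^ N := by gcongr
      _ = Real.exp (-(N * p)) * Fintype.card (Fin N → C) := by
          rw [mul_pow, ← Real.exp_nat_mul, mul_neg]
          simp
      _ ≤ Real.exp (-1) * Fintype.card (Fin N → C) := by gcongr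
      _ ≤ 1 / 2 * Fintype.card (Fin N → C) := by
          gcongr
          rw [Real.exp_neg, ← one_div]
          exact one_div_le_one_div_of_le two_pos Real.exp_one_gt_two.le
  linarith

-- Flipping the sign of the large term changes the sum by at least `2 * r`, so of any two sign
-- patterns differing only there, at least one is good.
lemma half_card_le_card_signs [DecidableEq C] {S : Finset C} {a : C → ℝ} {r : ℝ} {c₀ : C}
    (hc₀ : c₀ ∈ S) (hr : r ≤ |a c₀|) :
    1 / 2 * Fintype.card (C → Bool) ≤ ((Finset.univ.filter fun e : C → Bool =>
      r ≤ |∑ c ∈ S, (if e c then 1 else -1) * a c|).card : ℝ) := by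
  let signedSum (e : C → Bool) : ℝ := ∑ c ∈ S, (if e c then 1 else -1) * a c
  let flip (e : C → Bool) : C → Bool := Function.update e c₀ !(e c₀)
  have flip_injective : Function.Injective flip :=
    Function.Involutive.injective fun e => by simp [flip]
  have flip_large (e : C → Bool) (he : ¬ r ≤ |signedSum e|) : r ≤ |signedSum (flip e)| := by
    have rest : ∑ c ∈ S.erase c₀, (if flip e c then 1 else -1) * a c =
        ∑ c ∈ S.erase c₀, (if e c then 1 else -1) * a c :=
      Finset.sum_congr rfl fun c hc => by
        simp [flip, Function.update_of_ne (Finset.ne_of_mem_erase hc)]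
    have diff : |signedSum e - signedSum (flip e)| = 2 * |a c₀| := by
      simp only [signedSum]
      rw [← Finset.add_sum_erase S _ hc₀, ← Finset.add_sum_erase S _ hc₀, rest,
        add_sub_add_right_eq_sub, ← sub_mul, abs_mul]
      congr 1
      cases h : e c₀ <;> norm_num [flip, h]
    linarith [abs_sub (signedSum e) (signedSum (flip e))]
  have bad_le_good : (Finset.univ.filter fun e => ¬ r ≤ |signedSum e|).card ≤
      (Finset.univ.filter fun e => r ≤ |signedSum e|).card :=
    Finset.card_le_card_of_injOn flip
      (fun e he => by simpa using flip_large e (by simpa using he)) flip_injective.injOn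
  have split := Finset.card_filter_add_card_filter_not (s := Finset.univ) fun e => r ≤ |signedSum e|
  have : (Fintype.card (C → Bool) : ℝ) ≤
      2 * (Finset.univ.filter fun e => r ≤ |signedSum e|).card := by
    exact_mod_cast show Fintype.card (C → Bool) ≤ _ by rw [← Finset.card_univ]; omega
  linarith

lemma exists_sparse_signs [Fintype X] [Nonempty C] (K : X → C → ℝ) {p r : ℝ} {N : ℕ}
    (hK : ∀ x, p * Fintype.card C ≤ (Finset.univ.filter fun c => r ≤ |K x c|).card)
    (hN : 1 ≤ N * p) :
    ∃ s : C → ℝ, (∀ c, s c = 0 ∨ |s c| = 1) ∧ (Finset.univ.filter fun c => s c ≠ 0).card ≤ N ∧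
      (Fintype.card X / 4 : ℝ) ≤ (Finset.univ.filter fun x => r ≤ |∑ c, s c * K x c|).card := by
  classical
  obtain ⟨centers, many_hit⟩ := exists_mul_card_le_card_filter (.univ : Finset X)
    (fun x (e : Fin N → C) => ∃ k, r ≤ |K x (e k)|)
    fun x _ => half_card_le_card_exists_hit (fun c => r ≤ |K x c|) (hK x) hN
  set hit := Finset.univ.filter fun x => ∃ k, r ≤ |K x (centers k)|
  set S := Finset.univ.image centers
  obtain ⟨e, many_large⟩ := exists_mul_card_le_card_filter hit
    (fun x (e : C → Bool) => r ≤ |∑ c ∈ S, (if e c then 1 else -1) * K x c|) fun x hx => by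
      obtain ⟨k, hk⟩ := (Finset.mem_filter.1 hx).2
      exact half_card_le_card_signs (Finset.mem_image_of_mem _ (Finset.mem_univ k)) hk
  let s (c : C) : ℝ := if c ∈ S then if e c then 1 else -1 else 0
  refine ⟨s, fun c => ?_, ?_, ?_⟩
  · unfold s
    split_ifs <;> simp
  · have support_subset : (Finset.univ.filter fun c => s c ≠ 0) ⊆ S := fun c hc =>
      not_imp_comm.1 (fun hcS => if_neg hcS) (Finset.mem_filter.1 hc).2
    exact (Finset.card_le_card support_subset).trans
      (Finset.card_image_le.trans_eq (Finset.card_fin N))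
  · have large_subset : hit.filter (fun x => r ≤ |∑ c ∈ S, (if e c then 1 else -1) * K x c|) ⊆
        Finset.univ.filter fun x => r ≤ |∑ c, s c * K x c| := by
      intro x hx
      simpa [s, ite_mul, Finset.sum_ite_mem] using (Finset.mem_filter.1 hx).2
    have := (Nat.cast_le (α := ℝ)).2 (Finset.card_le_card large_subset)
    rw [Finset.card_univ] at many_hit
    linarith

end RandomSigns

section OrliczNorm

variable {d : ℕ} {Q : YoungFunction} {f g : (Fin d → ℝ) → ℝ}

lemma YoungFunction.monotoneOn (Q : YoungFunction) : MonotoneOn Q.toFun (Set.Ici 0) := by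
  intro a ha b hb hab
  rcases (Set.mem_Ici.1 hb).eq_or_lt with rfl | hb
  · rw [le_antisymm hab ha]
  have convex := Q.convexOn.2 (Set.mem_univ b) (Set.mem_univ 0) (div_nonneg ha hb.le)
    (sub_nonneg.2 ((div_le_one hb).2 hab)) (add_sub_cancel _ _)
  simp only [smul_eq_mul, mul_zero, add_zero, Q.map_zero, div_mul_cancel₀ _ hb.ne'] at convex
  exact convex.trans (mul_le_of_le_one_left (Q.nonneg b) ((div_le_one hb).2 hab))

lemma YoungFunction.exists_le_add (Q : YoungFunction) : ∃ u₀, 0 ≤ u₀ ∧ ∀ u, u ≤ u₀ + Q.toFun u := by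
  obtain ⟨u₀, u₀_pos, large⟩ := ((eventually_gt_atTop 0).and
    (eventually_forall_ge_atTop.2 (Q.tendsto_atTop.eventually_ge_atTop 1))).exists
  refine ⟨u₀, u₀_pos.le, fun u => ?_⟩
  rcases le_total u u₀ with hu | hu
  · exact le_add_of_le_of_nonneg hu (Q.nonneg u)
  · exact le_add_of_nonneg_of_le u₀_pos.le ((one_le_div (u₀_pos.trans_le hu)).1 (large u hu))

lemma mem_orliczSet_zero (Q : YoungFunction) {k : ℝ} (hk : 0 < k) :
    k ∈ orliczSet Q (0 : (Fin d → ℝ) → ℝ) := by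
  simp [orliczSet, Q.map_zero, hk]

lemma smul_mem_orliczSet {c k : ℝ} (hc : c ≠ 0) (hk : k ∈ orliczSet Q f) :
    |c| * k ∈ orliczSet Q (c • f) := by
  obtain ⟨k_pos, integrable, integral_le⟩ := hk
  have scale (x : Fin d → ℝ) : |(c • f) x| / (|c| * k) = |f x| / k := by
    rw [Pi.smul_apply, smul_eq_mul, abs_mul, mul_div_mul_left _ _ (abs_ne_zero.2 hc)]
  refine ⟨by positivity, ?_, ?_⟩ <;> simpa only [scale]

lemma YoungFunction.toFun_abs_add_div_le (Q : YoungFunction) {a b : ℝ} (ha : 0 < a) (hb : 0 < b)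
    (u v : ℝ) :
    Q.toFun (|u + v| / (a + b)) ≤
      a / (a + b) * Q.toFun (|u| / a) + b / (a + b) * Q.toFun (|v| / b) := by
  have triangle : |u + v| / (a + b) ≤ a / (a + b) * (|u| / a) + b / (a + b) * (|v| / b) := by
    calc |u + v| / (a + b) ≤ (|u| + |v|) / (a + b) := by gcongr; exact abs_add_le u v
      _ = _ := by field_simp
  exact (Q.monotoneOn (by positivity : 0 ≤ |u + v| / (a + b))
    ((by positivity : 0 ≤ |u + v| / (a + b)).trans triangle) triangle).trans
      (Q.convexOn.2 (Set.mem_univ _) (Set.mem_univ _) (by positivity) (by positivity)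
        (by field_simp))

lemma add_mem_orliczSet {a b : ℝ} (hf : Measurable f) (hg : Measurable g)
    (ha : a ∈ orliczSet Q f) (hb : b ∈ orliczSet Q g) : a + b ∈ orliczSet Q (f + g) := by
  obtain ⟨a_pos, integrable_f, integral_f⟩ := ha
  obtain ⟨b_pos, integrable_g, integral_g⟩ := hb
  have pointwise (x : Fin d → ℝ) := Q.toFun_abs_add_div_le a_pos b_pos (f x) (g x)
  have integrable_bound := (integrable_f.const_mul (a / (a + b))).add
    (integrable_g.const_mul (b / (a + b)))
  have integrable_sum : Integrable (fun x => Q.toFun (|(f + g) x| / (a + b))) (cubeMeasure d) := by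
    refine integrable_bound.mono' (Q.continuous.measurable.comp
      ((hf.add hg).abs.div_const _)).aestronglyMeasurable (ae_of_all _ fun x => ?_)
    rw [Real.norm_of_nonneg (Q.nonneg _)]
    exact pointwise x
  refine ⟨add_pos a_pos b_pos, integrable_sum, ?_⟩
  calc ∫ x, Q.toFun (|(f + g) x| / (a + b)) ∂cubeMeasure d
      ≤ a / (a + b) * ∫ x, Q.toFun (|f x| / a) ∂cubeMeasure d +
          b / (a + b) * ∫ x, Q.toFun (|g x| / b) ∂cubeMeasure d := by
        rw [← integral_const_mul, ← integral_const_mul, ← integral_add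
          (integrable_f.const_mul _) (integrable_g.const_mul _)]
        exact integral_mono integrable_sum integrable_bound pointwise
    _ ≤ a / (a + b) * 1 + b / (a + b) * 1 := by gcongr
    _ = 1 := by field_simp

lemma MemOrlicz.smul (hf : MemOrlicz Q f) (c : ℝ) : MemOrlicz Q (c • f) := by
  refine ⟨hf.1.const_smul c, ?_⟩
  rcases eq_or_ne c 0 with rfl | hc
  · rw [zero_smul]
    exact ⟨1, mem_orliczSet_zero Q one_pos⟩
  · obtain ⟨k, hk⟩ := hf.2
    exact ⟨_, smul_mem_orliczSet hc hk⟩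

lemma MemOrlicz.add (hf : MemOrlicz Q f) (hg : MemOrlicz Q g) : MemOrlicz Q (f + g) := by
  obtain ⟨a, ha⟩ := hf.2
  obtain ⟨b, hb⟩ := hg.2
  exact ⟨hf.1.add hg.1, _, add_mem_orliczSet hf.1 hg.1 ha hb⟩

lemma MemOrlicz.sub (hf : MemOrlicz Q f) (hg : MemOrlicz Q g) : MemOrlicz Q (f - g) := by
  rw [sub_eq_add_neg, ← neg_one_smul ℝ g]
  exact hf.add (hg.smul (-1))

lemma bddBelow_orliczSet (Q : YoungFunction) (f : (Fin d → ℝ) → ℝ) : BddBelow (orliczSet Q f) :=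
  ⟨0, fun _ hk => hk.1.le⟩

lemma orliczNorm_nonneg (Q : YoungFunction) (f : (Fin d → ℝ) → ℝ) : 0 ≤ orliczNorm Q f :=
  Real.sInf_nonneg fun _ hk => hk.1.le

lemma orliczNorm_smul_le (hf : MemOrlicz Q f) (c : ℝ) :
    orliczNorm Q (c • f) ≤ |c| * orliczNorm Q f := by
  rcases eq_or_ne c 0 with rfl | hc
  · rw [abs_zero, zero_mul, zero_smul]
    exact le_of_forall_gt_imp_ge_of_dense fun k hk =>
      csInf_le (bddBelow_orliczSet Q 0) (mem_orliczSet_zero Q hk)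
  · rw [← div_le_iff₀' (abs_pos.2 hc)]
    refine le_csInf hf.2 fun k hk => ?_
    rw [div_le_iff₀' (abs_pos.2 hc)]
    exact csInf_le (bddBelow_orliczSet Q _) (smul_mem_orliczSet hc hk)

lemma orliczNorm_add_le (hf : MemOrlicz Q f) (hg : MemOrlicz Q g) :
    orliczNorm Q (f + g) ≤ orliczNorm Q f + orliczNorm Q g := by
  rw [← sub_le_iff_le_add]
  refine le_csInf hf.2 fun a ha => ?_
  rw [sub_le_comm]
  refine le_csInf hg.2 fun b hb => ?_
  rw [sub_le_iff_le_add']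
  exact csInf_le (bddBelow_orliczSet Q _) (add_mem_orliczSet hf.1 hg.1 ha hb)

lemma exists_integral_abs_le_mul_orliczNorm (d : ℕ) (Q : YoungFunction) :
    ∃ C, 0 ≤ C ∧ ∀ f : (Fin d → ℝ) → ℝ, MemOrlicz Q f →
      Integrable f (cubeMeasure d) ∧ ∫ x, |f x| ∂cubeMeasure d ≤ C * orliczNorm Q f := by
  obtain ⟨u₀, hu₀, le_add⟩ := Q.exists_le_add
  have C_pos : 0 < u₀ + 1 := by positivity
  have bound (f : (Fin d → ℝ) → ℝ) (hf : Measurable f) (k : ℝ) (hk : k ∈ orliczSet Q f) :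
      Integrable f (cubeMeasure d) ∧ ∫ x, |f x| ∂cubeMeasure d ≤ (u₀ + 1) * k := by
    obtain ⟨k_pos, integrable, integral_le⟩ := hk
    have pointwise (x : Fin d → ℝ) : |f x| ≤ k * (u₀ + Q.toFun (|f x| / k)) :=
      (div_le_iff₀' k_pos).1 (le_add _)
    have integrable_bound := ((integrable_const u₀).add integrable).const_mul k
    have integrable_f := integrable_bound.mono' hf.aestronglyMeasurable (ae_of_all _ pointwise)
    refine ⟨integrable_f, (integral_mono integrable_f.abs integrable_bound pointwise).trans ?_⟩
    simp only [Pi.add_apply]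
    rw [integral_const_mul, integral_add (integrable_const _) integrable, integral_const,
      probReal_univ, one_smul, mul_comm]
    gcongr
  refine ⟨u₀ + 1, C_pos.le, fun f hf => ⟨?_, ?_⟩⟩
  · obtain ⟨k, hk⟩ := hf.2
    exact (bound f hf.1 k hk).1
  · rw [← div_le_iff₀' C_pos]
    exact le_csInf hf.2 fun k hk => (div_le_iff₀' C_pos).2 (bound f hf.1 k hk).2

end OrliczNorm

section Growth

lemma log_one_add_mul_le {k u : ℝ} (hk : 0 ≤ k) (hu : 1 ≤ u) :
    Real.log (1 + k * u) ≤ (1 + Real.log (1 + k) / Real.log 2) * Real.log (1 + u) := by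
  have log_two_pos : 0 < Real.log 2 := Real.log_pos one_lt_two
  have log_k_nonneg : 0 ≤ Real.log (1 + k) := Real.log_nonneg (by linarith)
  calc Real.log (1 + k * u) ≤ Real.log ((1 + u) * (1 + k)) :=
        Real.log_le_log (by positivity) (by nlinarith)
    _ = Real.log (1 + u) + Real.log (1 + k) / Real.log 2 * Real.log 2 := by
        rw [Real.log_mul (by positivity) (by positivity), div_mul_cancel₀ _ log_two_pos.ne']
    _ ≤ Real.log (1 + u) + Real.log (1 + k) / Real.log 2 * Real.log (1 + u) := by
        gcongr
        linarith
    _ = _ := by ring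

lemma exists_mul_log_pow_le_add {Φ : ℝ → ℝ} (Φ_nonneg : ∀ u, 0 ≤ Φ u) {C k : ℝ} (hC : 0 ≤ C)
    (hk : 0 ≤ k) {b : ℕ} (growth : ∀ᶠ u in atTop, u * Real.log (1 + u) ^ b ≤ C * Φ u) :
    ∃ A C', ∀ u, 0 ≤ u → k * u * Real.log (1 + k * u) ^ b ≤ A + C' * Φ u := by
  obtain ⟨H, H_ge_one, large⟩ :=
    (eventually_ge_atTop 1).and (eventually_forall_ge_atTop.2 growth) |>.exists
  set c := 1 + Real.log (1 + k) / Real.log 2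
  have log_nonneg {u : ℝ} (hu : 0 ≤ u) : 0 ≤ Real.log (1 + u) := Real.log_nonneg (by linarith)
  have c_nonneg : 0 ≤ c := add_nonneg zero_le_one (div_nonneg (log_nonneg hk) (by positivity))
  refine ⟨k * H * Real.log (1 + k * H) ^ b, k * c ^ b * C, fun u hu => ?_⟩
  rcases le_total u H with huH | hHu
  · refine le_add_of_le_of_nonneg ?_ (by have := Φ_nonneg u; positivity)
    have := log_nonneg (mul_nonneg hk hu)
    gcongr
  · refine le_add_of_nonneg_of_le
      (by have := log_nonneg (by positivity : 0 ≤ k * H); positivity) ?_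
    calc k * u * Real.log (1 + k * u) ^ b ≤ k * u * (c * Real.log (1 + u)) ^ b := by
          have := log_nonneg (mul_nonneg hk hu)
          gcongr
          exact log_one_add_mul_le hk (H_ge_one.trans hHu)
      _ = k * c ^ b * (u * Real.log (1 + u) ^ b) := by rw [mul_pow]; ring
      _ ≤ k * c ^ b * (C * Φ u) := mul_le_mul_of_nonneg_left (large u hHu) (by positivity)
      _ = k * c ^ b * C * Φ u := by ring

lemma frequently_le_mul_log_pow_of_not_integrable {d b : ℕ} {Q : YoungFunction}
    {g : (Fin d → ℝ) → ℝ} (hg : MemOrlicz Q g)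
    (not_integrable : ¬ Integrable (fun x => |g x| * Real.log (1 + |g x|) ^ b) (cubeMeasure d))
    {ε : ℝ} (hε : 0 < ε) : ∃ᶠ u in atTop, Q.toFun u ≤ ε * (u * Real.log (1 + u) ^ b) := by
  by_contra rare
  refine not_integrable ?_
  have growth : ∀ᶠ u in atTop, u * Real.log (1 + u) ^ b ≤ ε⁻¹ * Q.toFun u :=
    (not_frequently.1 rare).mono fun u hu => (le_inv_mul_iff₀ hε).2 (not_le.1 hu).le
  obtain ⟨measurable_g, k, k_pos, integrable, -⟩ := hg
  obtain ⟨A, C, bound⟩ := exists_mul_log_pow_le_add Q.nonneg (inv_nonneg.2 hε.le) k_pos.le growth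
  refine ((integrable_const A).add (integrable.const_mul C)).mono' (measurable_g.abs.mul
    ((Real.measurable_log.comp (measurable_g.abs.const_add 1)).pow_const b)).aestronglyMeasurable
    (ae_of_all _ fun x => ?_)
  have log_nonneg : 0 ≤ Real.log (1 + |g x|) := Real.log_nonneg (by linarith [abs_nonneg (g x)])
  rw [Real.norm_of_nonneg (by positivity)]
  simpa only [Pi.add_apply, mul_div_cancel₀ _ k_pos.ne'] using bound (|g x| / k) (by positivity)

end Growth

section Scales

lemma log_one_add_le_of_lt_two_pow {h : ℝ} (h_nonneg : 0 ≤ h) {n : ℕ} (hn : 1 ≤ n)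
    (h_lt : h < 2 ^ n) : Real.log (1 + h) ≤ 2 * n := by
  have n_ge_one : (1 : ℝ) ≤ n := by exact_mod_cast hn
  calc Real.log (1 + h) ≤ Real.log (2 ^ (n + 1)) := by
        refine Real.log_le_log (by linarith) ?_
        rw [pow_succ]
        linarith [one_le_pow₀ (one_le_two (α := ℝ)) (n := n)]
    _ = (n + 1) * Real.log 2 := by
        rw [Real.log_pow]
        push_cast
        rfl
    _ ≤ (n + 1) * 1 := by
        gcongr
        linarith [Real.log_two_lt_d9]
    _ ≤ 2 * n := by linarith

lemma one_le_two_pow_div_pow (b q : ℕ) :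
    (1 : ℝ) ≤ 2 ^ (b * (q + 1)) / (q + 1) ^ (b - 1) := by
  have base : (q + 1 : ℝ) ≤ 2 ^ (q + 1) := by exact_mod_cast (Nat.lt_two_pow_self (n := q + 1)).le
  rw [one_le_div (by positivity)]
  calc (q + 1 : ℝ) ^ (b - 1) ≤ (q + 1) ^ b :=
        pow_le_pow_right₀ (by linarith [q.cast_nonneg (α := ℝ)]) (Nat.sub_le b 1)
    _ ≤ (2 ^ (q + 1)) ^ b := by gcongr
    _ = 2 ^ (b * (q + 1)) := by rw [← pow_mul, mul_comm]

lemma log_pow_mul_le_of_lt_two_pow {b q m : ℕ} (hb : 1 ≤ b) {h v : ℝ} (h_nonneg : 0 ≤ h)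
    (h_lt : h < 2 ^ (2 * b ^ 2 * (q + 1)))
    (m_le : (2 : ℝ) ^ (b * m) ≤ 2 * v * (2 ^ (b * (q + 1)) / (q + 1) ^ (b - 1))) :
    Real.log (1 + h) ^ (b - 1) * (2 ^ ((m + 1) * b) * 2 ^ b) ≤
      2 * 8 ^ b * (4 * b ^ 2) ^ (b - 1) * v * 2 ^ (b * q) := by
  have log_le : Real.log (1 + h) ≤ 4 * b ^ 2 * (q + 1) := by
    refine (log_one_add_le_of_lt_two_pow h_nonneg
      (Nat.one_le_iff_ne_zero.2 (by positivity)) h_lt).trans_eq ?_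
    push_cast
    ring
  have log_nonneg : 0 ≤ Real.log (1 + h) := Real.log_nonneg (by linarith)
  calc Real.log (1 + h) ^ (b - 1) * (2 ^ ((m + 1) * b) * 2 ^ b)
      = Real.log (1 + h) ^ (b - 1) * (2 ^ b * 2 ^ (b * m) * 2 ^ b) := by ring
    _ ≤ (4 * b ^ 2 * (q + 1)) ^ (b - 1) *
          (2 ^ b * (2 * v * (2 ^ (b * (q + 1)) / (q + 1) ^ (b - 1))) * 2 ^ b) := by gcongr
    _ = 2 * (2 ^ b) ^ 3 * (4 * b ^ 2) ^ (b - 1) * v * 2 ^ (b * q) := by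
        rw [mul_pow _ (q + 1 : ℝ), mul_add b, mul_one, pow_add]
        field_simp
    _ = 2 * 8 ^ b * (4 * b ^ 2) ^ (b - 1) * v * 2 ^ (b * q) := by
        rw [← pow_mul, mul_comm b 3, pow_mul]
        norm_num

/-- The parameters of the extremal step function of height `h` whose Young function value is `v`:
it is supported on `N` cells of side `2^(-M)`, and its partial sums of order `pIdx (b * q)` are
large because of the products of `b` Dirichlet kernels that exceed `2^(b * q) / 2^b`. -/
structure ScaleParameters (b : ℕ) (h v : ℝ) where
  q : ℕ
  M : ℕ
  N : ℕ
  two_mul_lt : 2 * (b * q) < M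
  many_cells : (2 : ℝ) ^ (b * (q + 1)) ≤ (q + 1) ^ (b - 1) * N
  small_support : v * N ≤ 2 ^ (M * b)
  large_value : Real.log (1 + h) ^ (b - 1) * (2 ^ (M * b) * 2 ^ b) ≤
    2 * 8 ^ b * (4 * b ^ 2) ^ (b - 1) * v * 2 ^ (b * q)

lemma nonempty_scaleParameters {b : ℕ} (hb : 1 ≤ b) {h v : ℝ} (hh : 1 ≤ h) (hv : h ≤ v) :
    Nonempty (ScaleParameters b h v) := by
  have v_pos : 0 < v := by linarith
  obtain ⟨q, q_le, lt_q⟩ := exists_nat_pow_near hh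
    (one_lt_pow₀ (one_lt_two (α := ℝ)) (by positivity : 2 * b ^ 2 ≠ 0))
  rw [← pow_mul] at q_le lt_q
  set t : ℝ := 2 ^ (b * (q + 1)) / (q + 1) ^ (b - 1)
  have t_ge_one : 1 ≤ t := one_le_two_pow_div_pow b q
  obtain ⟨m, m_le, lt_m⟩ := exists_nat_pow_near (by nlinarith : 1 ≤ 2 * v * t)
    (one_lt_pow₀ (one_lt_two (α := ℝ)) (by omega : b ≠ 0))
  rw [← pow_mul] at m_le lt_m
  refine ⟨q, m + 1, ⌈t⌉₊, ?_, ?_, ?_, ?_⟩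
  · have : (2 : ℝ) ^ (b * (2 * (b * q))) < 2 ^ (b * (m + 1)) := by
      calc (2 : ℝ) ^ (b * (2 * (b * q))) = 2 ^ (2 * b ^ 2 * q) := by ring_nf
        _ ≤ 2 * v * t := by nlinarith
        _ < _ := lt_m
    exact lt_of_mul_lt_mul_left ((pow_lt_pow_iff_right₀ one_lt_two).1 this) b.zero_le
  · calc (2 : ℝ) ^ (b * (q + 1)) = (q + 1) ^ (b - 1) * t := by
          rw [mul_div_cancel₀ _ (by positivity)]
      _ ≤ _ := by gcongr; exact Nat.le_ceil t
  · calc v * ⌈t⌉₊ ≤ v * (2 * t) := by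
          gcongr
          linarith [Nat.ceil_lt_add_one (zero_le_one.trans t_ge_one)]
      _ ≤ 2 ^ ((m + 1) * b) := by
          rw [mul_comm (m + 1)]
          linarith
  · exact log_pow_mul_le_of_lt_two_pow hb (by linarith) lt_q m_le

end Scales

section ExtremalFunction

variable {d M : ℕ} {B : Finset (Fin d)}

lemma dyadicPartialSum_eq_sum (n : ℕ) (F : (B → Fin M → Bool) → ℝ) (y : B → Fin M → Bool) :
    dyadicPartialSum n F y =
      (∑ c, F c * ∏ i, signDirichlet n (boolSign (c i) * boolSign (y i))) / 2 ^ (M * B.card) := by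
  rw [dyadicPartialSum, Finset.sum_div]
  refine Finset.sum_congr rfl fun c _ => ?_
  rw [Finset.prod_mul_distrib, Finset.prod_const, Finset.card_univ, Fintype.card_coe, inv_pow,
    ← pow_mul]
  ring

lemma exists_sparse_signs_dyadicPartialSum (hB : B.Nonempty) {A q N : ℕ} (hq : B.card * q ≤ 2 * A)
    (hA : 2 * A < M) (hN : (2 : ℝ) ^ (B.card * (q + 1)) ≤ (q + 1) ^ (B.card - 1) * N) :
    ∃ s : (B → Fin M → Bool) → ℝ, (∀ c, s c = 0 ∨ |s c| = 1) ∧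
      (Finset.univ.filter fun c => s c ≠ 0).card ≤ N ∧
      (2 ^ (M * B.card) / 4 : ℝ) ≤ (Finset.univ.filter fun y =>
        2 ^ (B.card * q) / 2 ^ B.card / 2 ^ (M * B.card) ≤
          |dyadicPartialSum (pIdx A) s y|).card := by
  have : Nonempty B := hB.to_subtype
  have card_cells : (Fintype.card (B → Fin M → Bool) : ℝ) = 2 ^ (M * B.card) := by
    simp [pow_mul]
  set K := fun y c : B → Fin M → Bool =>
    ∏ i, signDirichlet (pIdx A) (boolSign (c i) * boolSign (y i))
  have proportion (y : B → Fin M → Bool) :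
      ((q + 1) ^ (B.card - 1) / 2 ^ (B.card * (q + 1)) : ℝ) * Fintype.card (B → Fin M → Bool) ≤
        (Finset.univ.filter fun c => 2 ^ (B.card * q) / 2 ^ B.card ≤ |K y c|).card := by
    have := le_card_two_pow_le_abs_prod_signDirichlet (β := B) (by rwa [Fintype.card_coe]) hA y
    rwa [card_cells, div_mul_eq_mul_div, ← Fintype.card_coe B]
  obtain ⟨s, sign, sparse, large⟩ := exists_sparse_signs K proportion
    (by rwa [mul_div_assoc', one_le_div (by positivity), mul_comm (N : ℝ)])
  refine ⟨s, sign, sparse, ?_⟩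
  rw [card_cells] at large
  have cells_pos : (0 : ℝ) < 2 ^ (M * B.card) := by positivity
  simpa only [dyadicPartialSum_eq_sum, abs_div, abs_of_pos cells_pos,
    div_le_div_iff_of_pos_right cells_pos] using large

lemma eventually_le_measureReal_mixedLogMean {n : ℕ} (n_pos : 0 < n) (hn : n ≤ 2 ^ M)
    (F : (B → Fin M → Bool) → ℝ) {R R' : ℝ} (hR : R < R') :
    ∀ᶠ κ in atTop, ((Finset.univ.filter fun y => R' ≤ |dyadicPartialSum n F y|).card : ℝ) /
      2 ^ (M * B.card) ≤ (cubeMeasure d).real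
        {x | R ≤ |mixedLogMean B (fun x => F (blockDigits B κ M x)) (fun _ => 2 ^ κ * n) x|} := by
  set large := Finset.univ.filter fun y => R' ≤ |dyadicPartialSum n F y|
  have stays_large : ∀ᶠ κ in atTop, ∀ y ∈ large, R ≤ |dilatedMean κ n F y| := by
    refine (Filter.eventually_all_finset large).2 fun y hy => ?_
    have := (tendsto_dilatedMean hn F y).abs.eventually_const_lt
      (hR.trans_le (Finset.mem_filter.1 hy).2)
    exact this.mono fun _ => le_of_lt
  filter_upwards [stays_large, eventually_ge_atTop 1] with κ hκ κ_pos
  have order : 2 ≤ 2 ^ κ * n := calc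
    2 ≤ 2 ^ κ := Nat.le_self_pow (by omega) 2
    _ ≤ 2 ^ κ * n := Nat.le_mul_of_pos_right _ n_pos
  have measure_large := measureReal_blockDigits_mem B κ (· ∈ large)
  rw [Finset.filter_mem_eq_inter, Finset.univ_inter] at measure_large
  rw [← measure_large]
  refine measureReal_mono fun x hx => ?_
  rw [Set.mem_ofPred_eq, mixedLogMean_comp_blockDigits order]
  exact hκ _ hx

lemma one_mem_orliczSet_comp_blockDigits (Q : YoungFunction) (κ : ℕ)
    {F : (B → Fin M → Bool) → ℝ} (hF : ∑ c, Q.toFun |F c| ≤ 2 ^ (M * B.card)) :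
    1 ∈ orliczSet Q fun x => F (blockDigits B κ M x) := by
  simp only [orliczSet, div_one, Set.mem_ofPred_eq]
  refine ⟨one_pos, integrable_comp_blockDigits B κ fun c => Q.toFun |F c|, ?_⟩
  rw [integral_comp_blockDigits B κ fun c => Q.toFun |F c|]
  exact (div_le_one (by positivity)).2 hF

lemma sum_young_mul_sign_le {ι : Type*} [Fintype ι] (Q : YoungFunction) {h : ℝ} (hh : 0 ≤ h)
    {s : ι → ℝ} (sign : ∀ c, s c = 0 ∨ |s c| = 1) {N : ℕ}
    (sparse : (Finset.univ.filter fun c => s c ≠ 0).card ≤ N) :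
    ∑ c, Q.toFun |h * s c| ≤ Q.toFun h * N := by
  have value (c : ι) : Q.toFun |h * s c| = if s c ≠ 0 then Q.toFun h else 0 := by
    rcases sign c with hc | hc
    · simp [hc, Q.map_zero]
    · have : s c ≠ 0 := fun h0 => by simp [h0] at hc
      rw [abs_mul, hc, mul_one, abs_of_nonneg hh, if_pos this]
  rw [Fintype.sum_congr _ _ value, ← Finset.sum_filter, Finset.sum_const, nsmul_eq_mul, mul_comm]
  gcongr
  exact Q.nonneg h

lemma exists_large_mixedLogMean_of_scaleParameters (hB : B.Nonempty) (Q : YoungFunction) {h : ℝ}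
    (h_pos : 0 < h) (scale : ScaleParameters B.card h (Q.toFun h)) {R : ℝ}
    (hR : R * (2 ^ (scale.M * B.card) * 2 ^ B.card) < h * 2 ^ (B.card * scale.q)) (k : ℕ) :
    ∃ ξ : (Fin d → ℝ) → ℝ, MemOrlicz Q ξ ∧ orliczNorm Q ξ ≤ 1 ∧ ∃ n ≥ k,
      1 / 4 ≤ (cubeMeasure d).real {x | R ≤ |mixedLogMean B ξ (fun _ => n) x|} := by
  revert hR
  obtain ⟨q, M, N, two_mul_lt, many_cells, small_support, -⟩ := scale
  intro hR
  set A := B.card * q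
  obtain ⟨s, sign, sparse, large⟩ :=
    exists_sparse_signs_dyadicPartialSum hB (A := A) (by omega) two_mul_lt many_cells
  have scaled (y : B → Fin M → Bool) : dyadicPartialSum (pIdx A) (fun c => h * s c) y =
      h * dyadicPartialSum (pIdx A) s y := by
    simp only [dyadicPartialSum, Finset.mul_sum, mul_assoc]
  have pIdx_pos : 0 < pIdx A := (Nat.two_pow_pos _).trans_le (two_pow_le_pIdx A)
  have pIdx_le : pIdx A ≤ 2 ^ M := (pIdx_lt A).le.trans (Nat.pow_le_pow_right two_pos two_mul_lt)
  have R_lt : R < h * (2 ^ A / 2 ^ B.card / 2 ^ (M * B.card)) := by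
    rwa [div_div, mul_div_assoc', lt_div_iff₀ (by positivity), mul_comm ((2 : ℝ) ^ B.card)]
  obtain ⟨κ, measure_ge, hκ⟩ := ((eventually_le_measureReal_mixedLogMean pIdx_pos pIdx_le
    (fun c => h * s c) R_lt).and (eventually_ge_atTop k)).exists
  have one_mem := one_mem_orliczSet_comp_blockDigits Q κ
    ((sum_young_mul_sign_le Q h_pos.le sign sparse).trans small_support)
  refine ⟨fun x => h * s (blockDigits B κ M x),
    ⟨(measurable_of_finite fun c => h * s c).comp (measurable_blockDigits B κ M), 1, one_mem⟩,
    csInf_le (bddBelow_orliczSet Q _) one_mem, 2 ^ κ * pIdx A, ?_, le_trans ?_ measure_ge⟩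
  · exact hκ.trans (Nat.lt_two_pow_self.le.trans (Nat.le_mul_of_pos_right _ pIdx_pos))
  · simp only [scaled, abs_mul, abs_of_pos h_pos, mul_le_mul_iff_right₀ h_pos]
    rw [le_div_iff₀ (by positivity)]
    linarith

lemma exists_large_mixedLogMean (hB : B.Nonempty) {Q : YoungFunction} (slow : ∀ ε > 0,
      ∃ᶠ u in atTop, Q.toFun u ≤ ε * (u * Real.log (1 + u) ^ (B.card - 1))) (R : ℝ) (k : ℕ) :
    ∃ ξ : (Fin d → ℝ) → ℝ, MemOrlicz Q ξ ∧ orliczNorm Q ξ ≤ 1 ∧ ∃ n ≥ k,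
      1 / 4 ≤ (cubeMeasure d).real {x | R ≤ |mixedLogMean B ξ (fun _ => n) x|} := by
  have card_pos : 0 < B.card := hB.card_pos
  set b := B.card
  set C : ℝ := 2 * 8 ^ b * (4 * b ^ 2) ^ (b - 1)
  have C_pos : 0 < C := by positivity
  obtain ⟨h, h_slow, h_ge_one, superlinear⟩ :=
    ((slow (1 / (C * (|R| + 1))) (by positivity)).and_eventually
      ((eventually_ge_atTop 1).and (Q.tendsto_atTop.eventually_ge_atTop 1))).exists
  have h_pos : 0 < h := by linarith
  obtain ⟨scale⟩ := nonempty_scaleParameters card_pos h_ge_one ((one_le_div h_pos).1 superlinear)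
  refine exists_large_mixedLogMean_of_scaleParameters hB Q h_pos scale ?_ k
  have log_pos : 0 < Real.log (1 + h) ^ (b - 1) := pow_pos (Real.log_pos (by linarith)) _
  set ℓ := Real.log (1 + h) ^ (b - 1)
  set cells : ℝ := 2 ^ (scale.M * b) * 2 ^ b
  have cells_pos : 0 < cells := by positivity
  have young_le : (|R| + 1) * (C * Q.toFun h) ≤ h * ℓ := by
    rw [one_div, ← div_eq_inv_mul, le_div_iff₀ (by positivity)] at h_slow
    linarith
  have : ℓ * ((|R| + 1) * cells) ≤ ℓ * (h * 2 ^ (b * scale.q)) := by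
    calc ℓ * ((|R| + 1) * cells) = (|R| + 1) * (ℓ * cells) := by ring
      _ ≤ (|R| + 1) * (C * Q.toFun h * 2 ^ (b * scale.q)) :=
          mul_le_mul_of_nonneg_left scale.large_value (by positivity)
      _ ≤ h * ℓ * 2 ^ (b * scale.q) := by
          rw [← mul_assoc]
          gcongr
      _ = _ := by ring
  calc R * cells < (|R| + 1) * cells := by
        gcongr
        linarith [le_abs_self R]
    _ ≤ _ := le_of_mul_le_mul_left this log_pos

end ExtremalFunction

section BoundedInMeasure

lemma tendsto_measureReal_le_abs {α : Type*} [MeasurableSpace α] {μ : Measure α}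
    [IsFiniteMeasure μ] {g : α → ℝ} (hg : Measurable g) :
    Tendsto (fun k : ℕ => μ.real {x | (k : ℝ) ≤ |g x|}) atTop (nhds 0) := by
  have inter_empty : (⋂ k : ℕ, {x | (k : ℝ) ≤ |g x|}) = ∅ := by
    refine Set.eq_empty_of_forall_notMem fun x hx => ?_
    obtain ⟨k, hk⟩ := exists_nat_gt |g x|
    exact hk.not_ge (Set.mem_iInter.1 hx k)
  have tendsto_inter : Tendsto (fun k : ℕ => μ {x | (k : ℝ) ≤ |g x|}) atTop
      (nhds (μ (⋂ k : ℕ, {x | (k : ℝ) ≤ |g x|}))) := by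
    refine tendsto_measure_iInter_atTop
      (fun k => (measurableSet_le measurable_const hg.abs).nullMeasurableSet)
      (fun j k hjk x hx => ?_) ⟨0, measure_ne_top _ _⟩
    exact le_trans (Nat.cast_le.2 hjk : (j : ℝ) ≤ k) hx
  rw [inter_empty, measure_empty] at tendsto_inter
  exact (ENNReal.tendsto_toReal ENNReal.zero_ne_top).comp tendsto_inter

lemma exists_forall_measureReal_le_of_tendstoInMeasure {α : Type*} [MeasurableSpace α]
    {μ : Measure α} [IsFiniteMeasure μ] {F : ℕ → α → ℝ} {g : α → ℝ} (hg : Measurable g)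
    (hF : TendstoInMeasure μ F atTop g) {δ : ℝ} (hδ : 0 < δ) :
    ∃ k : ℕ, ∀ n ≥ k, μ.real {x | (k : ℝ) ≤ |F n x|} ≤ δ := by
  have far_small := (tendstoInMeasure_iff_measureReal_dist.1 hF 1 one_pos).eventually_le_const
    (half_pos hδ)
  obtain ⟨n₀, far_small⟩ := eventually_atTop.1 far_small
  obtain ⟨j, limit_small⟩ :=
    ((tendsto_measureReal_le_abs (μ := μ) hg).eventually_le_const (half_pos hδ)).exists
  refine ⟨max n₀ (j + 1), fun n hn => ?_⟩
  have split : {x | ((max n₀ (j + 1) : ℕ) : ℝ) ≤ |F n x|} ⊆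
      {x | 1 ≤ dist (F n x) (g x)} ∪ {x | (j : ℝ) ≤ |g x|} := by
    refine fun x hx => or_iff_not_imp_right.2 fun g_small => ?_
    have F_large : (j + 1 : ℝ) ≤ |F n x| :=
      le_trans (by exact_mod_cast le_max_right n₀ (j + 1)) hx
    have g_small : |g x| < j := not_le.1 g_small
    change 1 ≤ |F n x - g x|
    linarith [abs_sub_abs_le_abs_sub (F n x) (g x)]
  calc _ ≤ _ := measureReal_mono split
    _ ≤ _ := measureReal_union_le _ _
    _ ≤ δ / 2 + δ / 2 := add_le_add (far_small n (le_of_max_le_left hn)) limit_small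
    _ = δ := add_halves δ

end BoundedInMeasure

section BaireCategory

variable {d : ℕ} {Q : YoungFunction} {f ξ : (Fin d → ℝ) → ℝ}

/-- A linear operator on `L_Q(I^d)` which is bounded into the bounded functions on the cube with
the supremum norm. -/
structure IsOrliczBounded (Q : YoungFunction) (T : ((Fin d → ℝ) → ℝ) → (Fin d → ℝ) → ℝ) :
    Prop where
  map_add : ∀ {f g}, MemOrlicz Q f → MemOrlicz Q g → T (f + g) = T f + T g
  map_smul : ∀ (c : ℝ) {f}, MemOrlicz Q f → T (c • f) = c • T f
  exists_bound : ∃ C, 0 ≤ C ∧ ∀ {f}, MemOrlicz Q f → ∀ x, |T f x| ≤ C * orliczNorm Q f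

lemma isOrliczBounded_mixedLogMean (Q : YoungFunction) (B : Finset (Fin d)) (n : Fin d → ℕ) :
    IsOrliczBounded Q fun f => mixedLogMean B f n := by
  obtain ⟨K, K_nonneg, integral_le⟩ := exists_integral_abs_le_mul_orliczNorm d Q
  obtain ⟨C, C_nonneg, mean_le⟩ := exists_abs_mixedLogMean_le B n
  exact
    { map_add := fun hf hg => mixedLogMean_add B (integral_le _ hf).1 (integral_le _ hg).1 n
      map_smul := fun c f _ => mixedLogMean_smul B c f n
      exists_bound := ⟨C * K, mul_nonneg C_nonneg K_nonneg, fun {f} hf x => by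
        rw [mul_assoc]
        exact (mean_le f x).trans (mul_le_mul_of_nonneg_left (integral_le f hf).2 C_nonneg)⟩ }

/-- The functions whose images under the operators `T n`, `n ≥ k`, exceed `k` in modulus only on
sets of measure at most `δ`. These sets exhaust the functions whose images converge in measure. -/
def measureBounded (T : ℕ → ((Fin d → ℝ) → ℝ) → (Fin d → ℝ) → ℝ) (δ : ℝ) (k : ℕ) :
    Set ((Fin d → ℝ) → ℝ) :=
  {f | ∀ n ≥ k, (cubeMeasure d).real {x | (k : ℝ) ≤ |T n f x|} ≤ δ}

namespace IsOrliczBounded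

variable {T : ((Fin d → ℝ) → ℝ) → (Fin d → ℝ) → ℝ}

lemma measureReal_le_abs_map_le_add (hT : IsOrliczBounded Q T) (hf : MemOrlicz Q f)
    (hξ : MemOrlicz Q ξ) {t : ℝ} (ht : 0 < t) (a : ℝ) :
    (cubeMeasure d).real {x | 2 * a / t ≤ |T ξ x|} ≤
      (cubeMeasure d).real {x | a ≤ |T f x|} +
        (cubeMeasure d).real {x | a ≤ |T (f + t • ξ) x|} := by
  refine (measureReal_mono fun x hx => ?_).trans (measureReal_union_le _ _)
  refine or_iff_not_imp_left.2 fun f_small => ?_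
  have f_small : |T f x| < a := not_le.1 f_small
  have ξ_large : 2 * a ≤ |t * T ξ x| := by
    rw [abs_mul, abs_of_pos ht]
    exact (div_le_iff₀' ht).1 hx
  have image : T (f + t • ξ) x = T f x + t * T ξ x := by
    rw [hT.map_add hf (hξ.smul t), hT.map_smul t hξ]
    rfl
  have triangle := abs_sub (T f x + t * T ξ x) (T f x)
  rw [add_sub_cancel_left] at triangle
  change a ≤ |T (f + t • ξ) x|
  rw [image]
  linarith

-- One of `f` and `f + t • ξ` works, since both cannot have small images where `T ξ` is large.
lemma exists_near_lt_measureReal_le_abs_map (hT : IsOrliczBounded Q T) (hf : MemOrlicz Q f)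
    (hξ : MemOrlicz Q ξ) (ξ_norm : orliczNorm Q ξ ≤ 1) {t a δ : ℝ} (ht : 0 < t)
    (ξ_large : 2 * δ < (cubeMeasure d).real {x | 2 * a / t ≤ |T ξ x|}) :
    ∃ g, MemOrlicz Q g ∧ orliczNorm Q (g - f) ≤ t ∧
      δ < (cubeMeasure d).real {x | a ≤ |T g x|} := by
  have near (c : ℝ) (hc : |c| ≤ t) : orliczNorm Q (f + c • ξ - f) ≤ t := by
    rw [add_sub_cancel_left]
    calc orliczNorm Q (c • ξ) ≤ |c| * orliczNorm Q ξ := orliczNorm_smul_le hξ c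
      _ ≤ t * 1 := mul_le_mul hc ξ_norm (orliczNorm_nonneg Q ξ) ht.le
      _ = t := mul_one t
  by_cases f_large : δ < (cubeMeasure d).real {x | a ≤ |T f x|}
  · exact ⟨f, hf, by simpa using near 0 (by simpa using ht.le), f_large⟩
  · refine ⟨f + t • ξ, hf.add (hξ.smul t), near t (abs_of_pos ht).le, ?_⟩
    linarith [hT.measureReal_le_abs_map_le_add hf hξ ht a]

lemma exists_pos_measureReal_le_abs_map_le (hT : IsOrliczBounded Q T) :
    ∃ ρ > 0, ∀ {g h}, MemOrlicz Q g → MemOrlicz Q h → orliczNorm Q (h - g) < ρ → ∀ a : ℝ,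
      (cubeMeasure d).real {x | a + 1 ≤ |T g x|} ≤ (cubeMeasure d).real {x | a ≤ |T h x|} := by
  obtain ⟨C, C_nonneg, bound⟩ := hT.exists_bound
  refine ⟨1 / (C + 1), by positivity, fun {g h} hg hh near a => ?_⟩
  refine measureReal_mono fun x hx => ?_
  have diff_le : |T (h - g) x| ≤ 1 := by
    rw [lt_div_iff₀ (by positivity)] at near
    linarith [bound (hh.sub hg) x, orliczNorm_nonneg Q (h - g)]
  have decomposition : T h x = T g x + T (h - g) x := by
    rw [← Pi.add_apply, ← hT.map_add hg (hh.sub hg), add_sub_cancel]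
  have triangle := abs_sub (T h x) (T (h - g) x)
  rw [decomposition, add_sub_cancel_right, ← decomposition] at triangle
  have g_large : a + 1 ≤ |T g x| := hx
  change a ≤ |T h x|
  linarith

end IsOrliczBounded

lemma orliczNowhereDense_measureBounded {T : ℕ → ((Fin d → ℝ) → ℝ) → (Fin d → ℝ) → ℝ}
    (hT : ∀ n, IsOrliczBounded Q (T n)) {δ : ℝ} {k : ℕ}
    (large : ∀ R : ℝ, ∃ ξ, MemOrlicz Q ξ ∧ orliczNorm Q ξ ≤ 1 ∧ ∃ n ≥ k,
      2 * δ < (cubeMeasure d).real {x | R ≤ |T n ξ x|}) :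
    OrliczNowhereDense Q (measureBounded T δ k) := by
  intro f hf ε hε
  obtain ⟨ξ, hξ, ξ_norm, n, hn, ξ_large⟩ := large (2 * (k + 1) / (ε / 2))
  obtain ⟨g, hg, near, g_large⟩ :=
    (hT n).exists_near_lt_measureReal_le_abs_map hf hξ ξ_norm (half_pos hε) ξ_large
  obtain ⟨ρ, ρ_pos, stable⟩ := (hT n).exists_pos_measureReal_le_abs_map_le
  refine ⟨g, hg, min (ε / 2) ρ, by positivity, fun h hh close => ?_, fun h hh close mem => ?_⟩
  · calc orliczNorm Q (h - f) = orliczNorm Q (h - g + (g - f)) := by rw [sub_add_sub_cancel]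
      _ ≤ orliczNorm Q (h - g) + orliczNorm Q (g - f) := orliczNorm_add_le (hh.sub hg) (hg.sub hf)
      _ < ε / 2 + ε / 2 := add_lt_add_of_lt_of_le (close.trans_le (min_le_left _ _)) near
      _ = ε := add_halves ε
  · have := stable hg hh (close.trans_le (min_le_right _ _)) k
    exact (g_large.trans_le this).not_ge (mem n hn)

end BaireCategory

/-- Theorem (baire). If `|B| > 1` and `L_Q(I^d) ⊄ L log^{|B|-1} L(I^d)`, the
set of `f ∈ L_Q(I^d)` whose means `(L_{n(B)} ∘ R_{n(B')})(f)` converge in measure to an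
a.e. finite function is of first Baire category in `L_Q(I^d)`. -/
theorem stmt6 (d : ℕ) (hd : 1 ≤ d) (B : Finset (Fin d)) (hB : 1 < B.card)
    (Q : YoungFunction)
    (hQ : ∃ g : (Fin d → ℝ) → ℝ, MemOrlicz Q g ∧
      ¬ Integrable (fun x => |g x| * Real.log (1 + |g x|) ^ (B.card - 1)) (cubeMeasure d)) :
    OrliczMeager Q {f | MemOrlicz Q f ∧ ∃ g : (Fin d → ℝ) → ℝ, Measurable g ∧
      TendstoInMeasure (cubeMeasure d)
        (fun n x => mixedLogMean B f (fun _ => n) x) atTop g} := by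
  obtain ⟨g, hg, not_integrable⟩ := hQ
  have large := exists_large_mixedLogMean (Finset.card_pos.1 (zero_lt_one.trans hB))
    fun ε hε => frequently_le_mul_log_pow_of_not_integrable hg not_integrable hε
  refine ⟨measureBounded (fun n f => mixedLogMean B f fun _ => n) (1 / 16), fun k => ?_, ?_⟩
  · refine orliczNowhereDense_measureBounded
      (fun n => isOrliczBounded_mixedLogMean Q B fun _ => n) fun R => ?_
    obtain ⟨ξ, hξ, ξ_norm, n, hn, measure_ge⟩ := large R k
    exact ⟨ξ, hξ, ξ_norm, n, hn, lt_of_lt_of_le (by norm_num) measure_ge⟩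
  · rintro f ⟨-, limit, limit_measurable, converges⟩
    exact Set.mem_iUnion.2 (exists_forall_measureReal_le_of_tendstoInMeasure limit_measurable
      converges (by norm_num))

end
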